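/- arXiv:1511.09410 — 2 statements merged into one kernel-verified Lean document; each statement's English description precedes it below -/
import Mathlib

section
/- Let ν ≥ 0 be an integer. Then there exist C > 0 and x₀ > 0 such that for all x ≥ x₀, |π x^{3/2} S^{√Bessel}(x,x) − 1| ≤ C x^{−1/2}; in particular S^{√Bessel}(x,x) = (x^{−3/2}/π)(1 + O(x^{−1/2})) as x → +∞. -/
open Filter Topology MeasureTheory

/-- Pochhammer symbol `(a)_k = a(a+1)⋯(a+k-1)`. -/
noncomputable def poch (a : ℂ) (k : ℕ) : ℂ := ∏ i ∈ Finset.range k, (a + i)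

/-- Modified Bessel function of the first kind of complex order `t`, real argument `z > 0`,
defined by its series, with `1/Γ = 0` at the poles of `Γ`. -/
noncomputable def besselI (t : ℂ) (z : ℝ) : ℂ :=
  ∑' m : ℕ, (1 / ((m.factorial : ℂ) * Complex.Gamma (t + m + 1))) *
    ((z / 2 : ℝ) : ℂ) ^ (2 * (m : ℂ) + t)

/-- Modified Bessel function of the second kind of complex order `κ` (with `Re κ > -1/2`),
real argument `z > 0`. -/
noncomputable def besselK (κ : ℂ) (z : ℝ) : ℂ :=
  Complex.Gamma (κ + 1 / 2) * ((2 * z : ℝ) : ℂ) ^ κ / (Real.sqrt Real.pi : ℂ) *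
    ∫ t in Set.Ioi (0 : ℝ), (Real.cos t : ℂ) * (((t ^ 2 + z ^ 2 : ℝ) : ℂ)) ^ (-κ - 1 / 2)

/-- Bessel function of the first kind of real order `ρ`, argument `z > 0`. -/
noncomputable def besselJ (ρ : ℝ) (z : ℝ) : ℝ :=
  ∑' m : ℕ, ((-1 : ℝ) ^ m / (m.factorial * Real.Gamma ((m : ℝ) + 1 + ρ))) *
    (z / 2) ^ (2 * (m : ℝ) + ρ)

/-- The function `P_n(x)`. -/
noncomputable def Pfun (ν : ℕ) (μ : ℝ) (n : ℕ) (x : ℝ) : ℂ :=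
  (-1 : ℂ) ^ n * (((ν + n).factorial : ℂ) * (n.factorial : ℂ) / (ν.factorial : ℂ)) *
    (Real.sqrt μ : ℂ)⁻¹ *
    ∑ k ∈ Finset.range (n + 1),
      ((2 * Real.sqrt x / (1 - μ) : ℝ) : ℂ) ^ k *
        (poch (-(n : ℂ)) k / (poch ((ν : ℂ) + 1) k * (k.factorial : ℂ))) *
        besselI (k : ℂ) ((1 - μ) * Real.sqrt x / μ)

/-- The function `Q_n(y)`. -/
noncomputable def Qfun (ν : ℕ) (μ : ℝ) (n : ℕ) (y : ℝ) : ℂ :=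
  (-1 : ℂ) ^ n * (2 / ((n.factorial : ℂ) ^ 2 * (ν.factorial : ℂ))) * (Real.sqrt μ : ℂ)⁻¹ *
    ∑ l ∈ Finset.range (n + 1),
      ((2 * Real.sqrt y / (1 + μ) : ℝ) : ℂ) ^ (l + ν) *
        (poch (-(n : ℂ)) l / (poch ((ν : ℂ) + 1) l * (l.factorial : ℂ))) *
        besselK ((l : ℂ) + ν) ((1 + μ) * Real.sqrt y / μ)

/-- The correlation kernel `K_N(x,y;μ) = ∑_{n=0}^{N-1} P_n(x) Q_n(y)`. -/
noncomputable def Kker (ν N : ℕ) (μ x y : ℝ) : ℂ :=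
  ∑ n ∈ Finset.range N, Pfun ν μ n x * Qfun ν μ n y

/-- The Bessel kernel in square-root variables, for `x ≠ y`. -/
noncomputable def SBessel (ν : ℕ) (x y : ℝ) : ℝ :=
  -(y / x) ^ ((ν : ℝ) / 2) *
    (2 * Real.sqrt x * besselJ ((ν : ℝ) - 1) (2 * Real.sqrt x) * besselJ (ν : ℝ) (2 * Real.sqrt y) -
      2 * Real.sqrt y * besselJ ((ν : ℝ) - 1) (2 * Real.sqrt y) * besselJ (ν : ℝ) (2 * Real.sqrt x)) /
    ((x - y) * Real.sqrt x * Real.sqrt y)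

/-- The polynomial `𝒫(s,t,ν)`. -/
noncomputable def Ppoly (s t : ℂ) (ν : ℕ) : ℂ :=
  (1 / 4) * (t - s) * (t ^ 2 + s ^ 2 + (t + s) * ((ν : ℂ) - 1) - (ν : ℂ))

/-- The interpolating kernel `𝕊(x,y;g)` (residue-series form), for `x ≠ y`. -/
noncomputable def Sker (ν : ℕ) (g x y : ℝ) : ℂ :=
  (4 / (((x ^ 2 - y ^ 2 : ℝ) : ℂ) * (g : ℂ))) *
    ∑' k : ℕ, ∑' l : ℕ,
      ((-1 : ℂ) ^ (k + l) / ((k.factorial : ℂ) * (l.factorial : ℂ))) *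
        ((x : ℂ) ^ k * (y : ℂ) ^ (l + ν) /
          (Complex.Gamma ((k : ℂ) + ν + 1) * Complex.Gamma ((l : ℂ) + ν + 1))) *
        (Ppoly (l : ℂ) (k : ℂ) ν -
          (g : ℂ) * ((l : ℂ) ^ 2 + (k : ℂ) ^ 2 + (ν : ℂ) * l - (l : ℂ) * k)) *
        besselI (k : ℂ) (x / (2 * g)) * besselK ((l : ℂ) + ν) (y / (2 * g))

/-- The diagonal value `𝕊(x,x;g)` of the interpolating kernel. -/
noncomputable def SkerDiag (ν : ℕ) (g x : ℝ) : ℂ :=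
  (1 / ((g : ℂ) ^ 2 * (x : ℂ))) *
    ∑' k : ℕ, ∑' l : ℕ,
      ((-1 : ℂ) ^ (k + l) / ((k.factorial : ℂ) * (l.factorial : ℂ))) *
        ((x : ℂ) ^ (k + l + ν) /
          (Complex.Gamma ((k : ℂ) + ν + 1) * Complex.Gamma ((l : ℂ) + ν + 1))) *
        (Ppoly (l : ℂ) (k : ℂ) ν -
          (g : ℂ) * ((l : ℂ) ^ 2 + (k : ℂ) ^ 2 + (ν : ℂ) * l - (l : ℂ) * k)) *
        besselI ((k : ℂ) - 1) (x / (2 * g)) * besselK ((l : ℂ) + ν) (x / (2 * g))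

/-- The generalized Laguerre polynomial `L_n^{(ν)}(x)`. -/
noncomputable def laguerreL (ν n : ℕ) (x : ℝ) : ℝ :=
  ∑ k ∈ Finset.range (n + 1),
    (-1 : ℝ) ^ k * Real.Gamma ((n : ℝ) + ν + 1) /
      ((n - k).factorial * Real.Gamma ((ν : ℝ) + k + 1) * k.factorial) * x ^ k

/-- The function `A_N(s,t;μ)` from the Christoffel–Darboux analysis. -/
noncomputable def Afun (ν N : ℕ) (s t : ℂ) (μ : ℝ) : ℂ :=
  -(((1 + μ : ℝ) : ℂ) ^ 2 / 4) * (t - (N : ℂ)) * (t - (N : ℂ) + 1)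
  - (((1 + μ : ℝ) : ℂ) ^ 2 / 4) * ((ν : ℂ) + (N : ℂ) + 1) * ((N : ℂ) + 1) *
      (t - (N : ℂ)) / (s - (N : ℂ) - 1)
  - (μ : ℂ) * (3 * (N : ℂ) + (ν : ℂ)) * (t - (N : ℂ))
  - (((1 - μ : ℝ) : ℂ) ^ 2 / 2) * (2 * (N : ℂ) + (ν : ℂ)) * (t - (N : ℂ))
  + (μ : ℂ) * (N : ℂ) * (s - (N : ℂ))
  + (((1 - μ : ℝ) : ℂ) ^ 2 / 2) * (2 * (N : ℂ) + (ν : ℂ)) * (s - (N : ℂ))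
  + (((1 - μ : ℝ) : ℂ) ^ 2 / 4) * (s - (N : ℂ)) * (s - (N : ℂ) + 1)
  + (((1 - μ : ℝ) : ℂ) ^ 2 / 4) * ((N : ℂ) + 1) * ((ν : ℂ) + (N : ℂ) + 1) *
      (s - (N : ℂ)) / (t - (N : ℂ) - 1)

/-- Kummer's confluent hypergeometric function `Φ(a;b;z)`. -/
noncomputable def kummer (a b z : ℂ) : ℂ :=
  ∑' m : ℕ, poch a m / (poch b m * (m.factorial : ℂ)) * z ^ m

/-- Wright's generalized Bessel function `J_{a,b}(x)`. -/
noncomputable def wrightJ (a b x : ℝ) : ℝ :=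
  ∑' j : ℕ, (-x) ^ j / (j.factorial * Real.Gamma (a + b * j))

/-- Borodin's hard edge kernel `K^{(α,θ)}(x,y)`. -/
noncomputable def borodinK (α θ x y : ℝ) : ℝ :=
  θ * x ^ α * ∫ u in (0 : ℝ)..1,
    wrightJ ((α + 1) / θ) (1 / θ) (x * u) * wrightJ (α + 1) θ ((y * u) ^ θ) * u ^ α

/-!
At order zero the Turán determinant is `J_0² + J_1²`, and its value at `z` is `1/π` times the
integral of `Φ (z sin θ)` over `|θ| ≤ π/2`, where `Φ y = J_1(2y) / y`. For large `z` only `θ` near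
`0` contributes, so `z (J_0² + J_1²)` tends to `(1/π) ∫ Φ`. Up to scaling, `Φ` is the Fourier
transform of the semicircle `√(1 - x²)`, and Fourier inversion at the centre gives `∫ Φ = 2`, hence
the limit `2/π`. The rate `O(1/z)` comes from an almost conserved energy, a perturbation of
`z (J_0² + J_1²)` whose derivative is `O(z⁻²)`. Finally, `z` times the determinant changes by
`2 J_n J_{n+1} = O(1/z)` from order `n` to order `n + 1`, so every order has the asymptotics of
order zero.
-/

section BesselClifford

open scoped Nat
open Finset.HasAntidiagonal (antidiagonal mem_antidiagonal)

/-- The Bessel–Clifford function `∑ (-w)ᵐ / (m! (m + n)!)`, the entire function of `w = z ^ 2 / 4`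
left after dividing `J_n(z)` by `(z / 2) ^ n`. -/
noncomputable def besselClifford (n : ℕ) (w : ℝ) : ℝ :=
  ∑' m : ℕ, (-w) ^ m / (m ! * (m + n)!)

lemma norm_div_factorial_mul_factorial_le (a : ℝ) (m k : ℕ) :
    ‖a / (m ! * k !)‖ ≤ |a| / m ! := by
  have hm : (0 : ℝ) < m ! := mod_cast m.factorial_pos
  have hk : (1 : ℝ) ≤ k ! := mod_cast k.factorial_pos
  rw [Real.norm_eq_abs, abs_div, abs_of_pos (by positivity : (0 : ℝ) < m ! * k !)]
  gcongr
  exact le_mul_of_one_le_right hm.le hk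

lemma summable_norm_besselClifford (n : ℕ) (w : ℝ) :
    Summable fun m : ℕ => ‖(-w) ^ m / (m ! * (m + n)! : ℝ)‖ := by
  refine .of_nonneg_of_le (fun _ => norm_nonneg _) (fun m => ?_)
    (Real.summable_pow_div_factorial |w|)
  simpa [abs_pow] using norm_div_factorial_mul_factorial_le ((-w) ^ m) m (m + n)

lemma hasSum_besselClifford (n : ℕ) (w : ℝ) :
    HasSum (fun m : ℕ => (-w) ^ m / (m ! * (m + n)! : ℝ)) (besselClifford n w) :=
  (summable_norm_besselClifford n w).of_norm.hasSum

lemma summable_mul_pow_pred_div_factorial (r : ℝ) :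
    Summable fun m : ℕ => m * r ^ (m - 1) / m ! := by
  rw [← summable_nat_add_iff 1]
  refine (Real.summable_pow_div_factorial r).congr fun m => ?_
  rw [Nat.factorial_succ, Nat.add_sub_cancel]
  push_cast
  field_simp

lemma hasDerivAt_besselClifford (n : ℕ) (w : ℝ) :
    HasDerivAt (besselClifford n) (-besselClifford (n + 1) w) w := by
  have hderiv : HasDerivAt (besselClifford n)
      (∑' m : ℕ, m * (-w) ^ (m - 1) * -1 / (m ! * (m + n)! : ℝ)) w := by
    refine hasDerivAt_tsum_of_isPreconnected (summable_mul_pow_pred_div_factorial (|w| + 1))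
      Metric.isOpen_ball (convex_ball (0 : ℝ) (|w| + 1)).isPreconnected
      (fun m y _ => (((hasDerivAt_neg y).pow m).div_const _)) (fun m y hy => ?_)
      (y₀ := w) (by simp) (hasSum_besselClifford n w).summable (by simp)
    have hy' : |y| ≤ |w| + 1 := by simpa using (Metric.mem_ball.mp hy).le
    refine (norm_div_factorial_mul_factorial_le _ m (m + n)).trans ?_
    rw [abs_mul, abs_mul, abs_pow, abs_neg, abs_neg, abs_one, mul_one, Nat.abs_cast]
    gcongr
  have hsum : HasSum (fun m : ℕ => m * (-w) ^ (m - 1) * -1 / (m ! * (m + n)! : ℝ))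
      (-besselClifford (n + 1) w) := by
    rw [← hasSum_nat_add_iff' 1]
    simp only [Finset.range_one, Finset.sum_singleton, Nat.cast_zero, zero_mul, zero_div, sub_zero]
    refine (hasSum_besselClifford (n + 1) w).neg.congr_fun fun m => ?_
    rw [Nat.factorial_succ, Nat.add_sub_cancel, add_right_comm m 1 n, ← add_assoc m n 1]
    push_cast
    field_simp
  exact hsum.tsum_eq ▸ hderiv

lemma continuous_besselClifford (n : ℕ) : Continuous (besselClifford n) :=
  continuous_iff_continuousAt.mpr fun w => (hasDerivAt_besselClifford n w).continuousAt

lemma besselClifford_eq_sub (n : ℕ) (w : ℝ) :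
    besselClifford n w = (n + 1) * besselClifford (n + 1) w - w * besselClifford (n + 2) w := by
  have hsum : HasSum (fun m : ℕ => (n + 1) * ((-w) ^ m / (m ! * (m + (n + 1))! : ℝ)) -
      (-w) ^ m / (m ! * (m + n)! : ℝ)) (w * besselClifford (n + 2) w) := by
    have hfirst : (n + 1 : ℝ) * ((-w) ^ 0 / (0 ! * (0 + (n + 1))! : ℝ)) -
        (-w) ^ 0 / (0 ! * (0 + n)! : ℝ) = 0 := by
      rw [zero_add, zero_add, Nat.factorial_succ]
      push_cast
      field_simp
      ring
    rw [← hasSum_nat_add_iff' 1, Finset.sum_range_one, hfirst, sub_zero]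
    refine ((hasSum_besselClifford (n + 2) w).mul_left w).congr_fun fun m => ?_
    rw [add_right_comm m 1 n, add_right_comm m 1 (n + 1), ← add_assoc m n 1, ← add_assoc m n 2,
      Nat.factorial_succ m, Nat.factorial_succ (m + n + 1)]
    push_cast
    field_simp
    ring
  have hdiff := ((hasSum_besselClifford (n + 1) w).mul_left (n + 1 : ℝ)).sub
    (hasSum_besselClifford n w)
  linarith [hsum.unique hdiff]

lemma sum_antidiagonal_inv_factorial (p q m : ℕ) :
    ∑ ij ∈ antidiagonal m,
        ((ij.1 ! * (ij.1 + p)! : ℝ)⁻¹ * (ij.2 ! * (ij.2 + q)! : ℝ)⁻¹) =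
      (2 * m + p + q).choose m / ((m + p)! * (m + q)!) := by
  rw [show 2 * m + p + q = (m + q) + (m + p) by ring, Nat.add_choose_eq, Nat.cast_sum,
    Finset.sum_div]
  refine Finset.sum_congr rfl fun ⟨i, j⟩ hij => ?_
  obtain rfl := mem_antidiagonal.mp hij
  have hi : ((i + j + q).choose i : ℝ) = (i + j + q)! / (i ! * (j + q)!) := by
    rw [add_assoc, Nat.cast_add_choose]
  have hj : ((i + j + p).choose j : ℝ) = (i + j + p)! / (j ! * (i + p)!) := by
    rw [show i + j + p = j + (i + p) by ring, Nat.cast_add_choose]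
  rw [Nat.cast_mul, hi, hj]
  field_simp

lemma hasSum_besselClifford_mul (p q : ℕ) (w : ℝ) :
    HasSum (fun m : ℕ => (-w) ^ m * ((2 * m + p + q).choose m / ((m + p)! * (m + q)! : ℝ)))
      (besselClifford p w * besselClifford q w) := by
  have hp := summable_norm_besselClifford p w
  have hq := summable_norm_besselClifford q w
  have hterm (m : ℕ) : (-w) ^ m * ((2 * m + p + q).choose m / ((m + p)! * (m + q)! : ℝ)) =
      ∑ ij ∈ antidiagonal m, (-w) ^ ij.1 / (ij.1 ! * (ij.1 + p)! : ℝ) *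
        ((-w) ^ ij.2 / (ij.2 ! * (ij.2 + q)! : ℝ)) := by
    rw [← sum_antidiagonal_inv_factorial, Finset.mul_sum]
    refine Finset.sum_congr rfl fun ij hij => ?_
    rw [← mem_antidiagonal.mp hij, pow_add]
    ring
  simp only [hterm]
  rw [besselClifford, besselClifford,
    tsum_mul_tsum_eq_tsum_sum_antidiagonal_of_summable_norm hp hq]
  exact (summable_norm_sum_mul_antidiagonal_of_summable_norm hp hq).of_norm.hasSum

lemma catalan_succ_add_choose (k : ℕ) :
    catalan (k + 1) + (2 * k + 2).choose k = (k + 1).centralBinom := by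
  have hcat := succ_mul_catalan_eq_centralBinom (k + 1)
  have hchoose := Nat.choose_succ_right_eq (2 * k + 2) k
  rw [show 2 * k + 2 - k = k + 2 by omega] at hchoose
  have hcentral : (k + 1).centralBinom = (2 * k + 2).choose (k + 1) := rfl
  refine Nat.eq_of_mul_eq_mul_left (Nat.succ_pos (k + 1)) ?_
  rw [← hcentral] at hchoose
  linarith

lemma hasSum_besselClifford_zero_sq_add (w : ℝ) :
    HasSum (fun m : ℕ => (-w) ^ m * (catalan m / (m ! : ℝ) ^ 2))
      (besselClifford 0 w ^ 2 + w * besselClifford 1 w ^ 2) := by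
  have hzero : HasSum (fun m : ℕ => (-w) ^ m * (m.centralBinom / (m ! : ℝ) ^ 2))
      (besselClifford 0 w ^ 2) := by
    simpa [sq, Nat.centralBinom] using hasSum_besselClifford_mul 0 0 w
  have hone : HasSum (fun m : ℕ => (-w) ^ m * ((catalan m - m.centralBinom) / (m ! : ℝ) ^ 2))
      (w * besselClifford 1 w ^ 2) := by
    rw [← hasSum_nat_add_iff' 1, sq]
    simp only [Finset.range_one, Finset.sum_singleton, catalan_zero, Nat.centralBinom_zero,
      sub_self, zero_div, mul_zero, sub_zero]
    refine ((hasSum_besselClifford_mul 1 1 w).mul_left w).congr_fun fun m => ?_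
    rw [← catalan_succ_add_choose]
    push_cast
    ring
  refine (hzero.add hone).congr_fun fun m => ?_
  ring

end BesselClifford

section CalculusLemmas

open Asymptotics
open scoped Real

lemma hasSum_mul_integral_mul_pow {a b : ℝ} {f g : ℝ → ℝ} {c : ℕ → ℝ} (hf : Continuous f)
    (hg : Continuous g) (hg_le : ∀ x, |g x| ≤ 1) (hc : Summable fun k => |c k|) :
    HasSum (fun k => c k * ∫ x in a..b, f x * g x ^ k)
      (∫ x in a..b, f x * ∑' k, c k * g x ^ k) := by
  have hterm_le (k : ℕ) (x : ℝ) : |c k * g x ^ k| ≤ |c k| := by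
    rw [abs_mul, abs_pow]
    exact mul_le_of_le_one_right (abs_nonneg _) (pow_le_one₀ (abs_nonneg _) (hg_le x))
  simp_rw [← intervalIntegral.integral_const_mul, mul_left_comm]
  refine intervalIntegral.hasSum_integral_of_dominated_convergence (fun k x => |f x| * |c k|)
    (fun k => (by fun_prop : Continuous _).aestronglyMeasurable)
    (fun k => .of_forall fun x _ => ?_) (.of_forall fun x _ => hc.mul_left _) ?_
    (.of_forall fun x _ => ?_)
  · rw [Real.norm_eq_abs, abs_mul]
    exact mul_le_mul_of_nonneg_left (hterm_le k x) (abs_nonneg _)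
  · simp_rw [tsum_mul_left]
    exact (by fun_prop : Continuous _).intervalIntegrable _ _
  · exact (hc.of_nonneg_of_le (fun _ => abs_nonneg _) (hterm_le · x)).of_abs.hasSum.mul_left _

lemma integral_sin_sq_pow (k : ℕ) :
    ∫ θ in -(π / 2)..(π / 2), (Real.sin θ ^ 2) ^ k = π * k.centralBinom / 4 ^ k := by
  induction k with
  | zero => simp
  | succ k ih =>
    have hchoose : ((k + 1 : ℕ) * (k + 1).centralBinom : ℝ) = 2 * (2 * k + 1) * k.centralBinom :=
      mod_cast Nat.succ_mul_centralBinom_succ k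
    simp_rw [← pow_mul] at ih ⊢
    rw [mul_add_one, integral_sin_pow, ih, Real.cos_neg, Real.cos_pi_div_two, pow_succ (4 : ℝ)]
    push_cast at hchoose ⊢
    field_simp
    linear_combination (-2 * π) * hchoose

lemma integral_cos_sq_mul_sin_sq_pow (k : ℕ) :
    ∫ θ in -(π / 2)..(π / 2), Real.cos θ ^ 2 * (Real.sin θ ^ 2) ^ k =
      π / 2 * catalan k / 4 ^ k := by
  have hcat : ((k + 1 : ℕ) * catalan k : ℝ) = k.centralBinom :=
    mod_cast succ_mul_catalan_eq_centralBinom k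
  have hchoose : ((k + 1 : ℕ) * (k + 1).centralBinom : ℝ) = 2 * (2 * k + 1) * k.centralBinom :=
    mod_cast Nat.succ_mul_centralBinom_succ k
  have hsplit (θ : ℝ) : Real.cos θ ^ 2 * (Real.sin θ ^ 2) ^ k =
      (Real.sin θ ^ 2) ^ k - (Real.sin θ ^ 2) ^ (k + 1) := by
    rw [Real.cos_sq']
    ring
  simp_rw [hsplit]
  rw [intervalIntegral.integral_sub ((by fun_prop : Continuous _).intervalIntegrable _ _)
    ((by fun_prop : Continuous _).intervalIntegrable _ _), integral_sin_sq_pow,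
    integral_sin_sq_pow, pow_succ]
  push_cast at hcat hchoose ⊢
  have hk : (k + 1 : ℝ) ≠ 0 := by positivity
  field_simp
  refine mul_left_cancel₀ hk ?_
  linear_combination (-4) * hcat - 2 * hchoose

lemma integral_sqrt_one_sub_sq_mul {g : ℝ → ℝ} (hg : Continuous g) :
    ∫ x in (-1)..1, √(1 - x ^ 2) * g x =
      ∫ θ in -(π / 2)..(π / 2), Real.cos θ ^ 2 * g (Real.sin θ) := by
  have hsubst := intervalIntegral.integral_comp_mul_deriv (a := -(π / 2)) (b := π / 2)
    (fun θ _ => Real.hasDerivAt_sin θ) Real.continuous_cos.continuousOn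
    (by fun_prop : Continuous fun x => √(1 - x ^ 2) * g x)
  rw [Real.sin_neg, Real.sin_pi_div_two] at hsubst
  rw [← hsubst]
  refine intervalIntegral.integral_congr fun θ hθ => ?_
  rw [Set.uIcc_of_le (by linarith [Real.pi_pos])] at hθ
  simp only [Function.comp_apply]
  rw [← Real.cos_sq', Real.sqrt_sq (Real.cos_nonneg_of_mem_Icc hθ)]
  ring

lemma tendsto_mul_sin_div (t : ℝ) :
    Tendsto (fun z => z * Real.sin (t / z)) atTop (𝓝 t) := by
  have hsinc : Tendsto (fun z => t * Real.sinc (t / z)) atTop (𝓝 (t * Real.sinc 0)) :=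
    ((Real.continuous_sinc.tendsto 0).comp (tendsto_id.const_div_atTop t)).const_mul t
  rw [Real.sinc_zero, mul_one] at hsinc
  refine hsinc.congr' ?_
  filter_upwards [eventually_ne_atTop 0] with z hz
  rcases eq_or_ne t 0 with rfl | ht
  · simp
  · rw [Real.sinc_of_ne_zero (div_ne_zero ht hz)]
    field_simp

lemma mul_abs_le_abs_mul_sin_div {t z : ℝ} (hz : 0 < z) (ht : |t| ≤ z * (π / 2)) :
    2 / π * |t| ≤ |z * Real.sin (t / z)| := by
  have hle : |t / z| ≤ π / 2 := by
    rwa [abs_div, abs_of_pos hz, div_le_iff₀' hz]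
  calc 2 / π * |t| = z * (2 / π * |t / z|) := by
        rw [abs_div, abs_of_pos hz]
        field_simp
    _ ≤ z * |Real.sin (t / z)| := by gcongr; exact Real.mul_abs_le_abs_sin hle
    _ = |z * Real.sin (t / z)| := by rw [abs_mul, abs_of_pos hz]

lemma integrable_one_add_abs_rpow_neg {r : ℝ} (hr : 1 < r) :
    Integrable fun t : ℝ => (1 + |t|) ^ (-r) := by
  simpa using integrable_one_add_norm (E := ℝ) (μ := volume) (r := r) (by simpa using hr)

lemma mul_integral_comp_mul_sin (f : ℝ → ℝ) {z : ℝ} (hz : 0 < z) :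
    z * ∫ θ in -(π / 2)..(π / 2), f (z * Real.sin θ) =
      ∫ t, (Set.Ioc (-(z * (π / 2))) (z * (π / 2))).indicator
        (fun t => f (z * Real.sin (t / z))) t := by
  have hscale := intervalIntegral.integral_comp_div (a := -(z * (π / 2))) (b := z * (π / 2))
    (fun θ => f (z * Real.sin θ)) hz.ne'
  rw [neg_div, mul_div_cancel_left₀ _ hz.ne', smul_eq_mul] at hscale
  rw [integral_indicator measurableSet_Ioc, ← hscale,
    intervalIntegral.integral_of_le (by linarith [mul_pos hz Real.pi_div_two_pos])]

lemma tendsto_mul_integral_comp_mul_sin {f : ℝ → ℝ} {C r : ℝ} (hf : Continuous f) (hr : 1 < r)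
    (hbound : ∀ y, |f y| ≤ C * (1 + |y|) ^ (-r)) :
    Tendsto (fun z => z * ∫ θ in -(π / 2)..(π / 2), f (z * Real.sin θ)) atTop
      (𝓝 (∫ y, f y)) := by
  have hC : 0 ≤ C := by simpa using (abs_nonneg _).trans (hbound 0)
  have heq : (fun z => z * ∫ θ in -(π / 2)..(π / 2), f (z * Real.sin θ)) =ᶠ[atTop] fun z =>
      ∫ t, (Set.Ioc (-(z * (π / 2))) (z * (π / 2))).indicator
        (fun t => f (z * Real.sin (t / z))) t := by
    filter_upwards [eventually_gt_atTop 0] with z hz using mul_integral_comp_mul_sin f hz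
  refine Tendsto.congr' heq.symm (tendsto_integral_filter_of_dominated_convergence
    (fun t => C * (1 + |2 / π * t|) ^ (-r)) (.of_forall fun z => ?_) ?_ ?_ (.of_forall fun t => ?_))
  · exact ((by fun_prop : Continuous _).aestronglyMeasurable.indicator measurableSet_Ioc)
  · filter_upwards [eventually_gt_atTop 0] with z hz
    refine .of_forall fun t => ?_
    by_cases ht : t ∈ Set.Ioc (-(z * (π / 2))) (z * (π / 2))
    · rw [Set.indicator_of_mem ht, Real.norm_eq_abs]
      have hle := mul_abs_le_abs_mul_sin_div hz (abs_le.mpr ⟨ht.1.le, ht.2⟩)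
      rw [abs_mul, abs_of_pos (by positivity : 0 < 2 / π)]
      refine (hbound _).trans (mul_le_mul_of_nonneg_left ?_ hC)
      exact Real.rpow_le_rpow_of_nonpos (by positivity) (by gcongr) (by linarith)
    · rw [Set.indicator_of_notMem ht, norm_zero]
      positivity
  · exact ((integrable_one_add_abs_rpow_neg hr).comp_mul_left' (by positivity)).const_mul C
  · refine ((hf.tendsto t).comp (tendsto_mul_sin_div t)).congr' ?_
    have hwidth : Tendsto (fun z : ℝ => z * (π / 2)) atTop atTop :=
      tendsto_id.atTop_mul_const Real.pi_div_two_pos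
    filter_upwards [hwidth.eventually_gt_atTop |t|] with z hz
    have hmem : t ∈ Set.Ioc (-(z * (π / 2))) (z * (π / 2)) :=
      ⟨(abs_lt.mp hz).1, (abs_lt.mp hz).2.le⟩
    rw [Set.indicator_of_mem hmem, Function.comp_apply]

lemma abs_sub_le_div_of_hasDerivAt {f f' : ℝ → ℝ} {C z b : ℝ} (hz : 0 < z) (hzb : z ≤ b)
    (hderiv : ∀ y, z ≤ y → HasDerivAt f (f' y) y) (hf' : ∀ y, z ≤ y → |f' y| ≤ C / y ^ 2) :
    |f b - f z| ≤ C / z - C / b := by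
  have hbound (y : ℝ) (hy : z ≤ y) : HasDerivAt (fun y => C / z - C / y) (C / y ^ 2) y := by
    have hinv := ((hasDerivAt_inv (hz.trans_le hy).ne').const_mul C).const_sub (C / z)
    simpa [div_eq_mul_inv] using hinv
  exact image_norm_le_of_norm_deriv_right_le_deriv_boundary' (f := fun y => f y - f z)
    (fun y hy => ((hderiv y hy.1).sub_const _).continuousAt.continuousWithinAt)
    (fun y hy => ((hderiv y hy.1).sub_const _).hasDerivWithinAt) (by simp)
    (fun y hy => (hbound y hy.1).continuousAt.continuousWithinAt)
    (fun y hy => (hbound y hy.1).hasDerivWithinAt) (fun y hy => hf' y hy.1)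
    (Set.right_mem_Icc.mpr hzb)

lemma isBigO_inv_of_hasDerivAt_of_tendsto {f f' : ℝ → ℝ} {L : ℝ}
    (hderiv : ∀ᶠ z in atTop, HasDerivAt f (f' z) z)
    (hf' : f' =O[atTop] fun z => (z ^ 2)⁻¹) (hlim : Tendsto f atTop (𝓝 L)) :
    (fun z => f z - L) =O[atTop] fun z => z⁻¹ := by
  obtain ⟨C, hC⟩ := hf'.bound
  obtain ⟨a, ha⟩ := eventually_atTop.mp (hderiv.and hC)
  refine IsBigO.of_bound C ?_
  filter_upwards [eventually_ge_atTop a, eventually_gt_atTop 0] with z haz hz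
  have hincr (b : ℝ) (hzb : z ≤ b) : |f b - f z| ≤ C / z - C / b :=
    abs_sub_le_div_of_hasDerivAt hz hzb (fun y hy => (ha y (haz.trans hy)).1) fun y hy => by
      simpa [div_eq_mul_inv] using (ha y (haz.trans hy)).2
  have hleft : Tendsto (fun b => |f b - f z|) atTop (𝓝 |L - f z|) := (hlim.sub_const _).abs
  have hright : Tendsto (fun b => C / z - C / b) atTop (𝓝 (C / z - 0)) :=
    (tendsto_id.const_div_atTop C).const_sub _
  have hle := le_of_tendsto_of_tendsto hleft hright ((eventually_ge_atTop z).mono hincr)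
  rwa [sub_zero, abs_sub_comm, div_eq_mul_inv, ← Real.norm_eq_abs,
    ← Real.norm_of_nonneg (inv_nonneg.mpr hz.le)] at hle

end CalculusLemmas

section SemicircleFourier

open FourierTransform
open scoped Nat Real

lemma integral_besselClifford_one_mul_sin_sq (z : ℝ) :
    ∫ θ in -(π / 2)..(π / 2), besselClifford 1 ((z * Real.sin θ) ^ 2) =
      π * (besselClifford 0 (z ^ 2 / 4) ^ 2 + z ^ 2 / 4 * besselClifford 1 (z ^ 2 / 4) ^ 2) := by
  have hseries := hasSum_mul_integral_mul_pow (a := -(π / 2)) (b := π / 2) (f := fun _ => 1)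
    (g := fun θ => Real.sin θ ^ 2) (by fun_prop) (by fun_prop)
    (fun θ => by rw [abs_of_nonneg (sq_nonneg _)]; exact Real.sin_sq_le_one θ)
    (summable_norm_besselClifford 1 (z ^ 2))
  have hmoments : HasSum (fun k : ℕ => (-z ^ 2) ^ k / (k ! * (k + 1)! : ℝ) *
      ∫ θ in -(π / 2)..(π / 2), 1 * (Real.sin θ ^ 2) ^ k)
      (π * (besselClifford 0 (z ^ 2 / 4) ^ 2 +
        z ^ 2 / 4 * besselClifford 1 (z ^ 2 / 4) ^ 2)) := by
    refine ((hasSum_besselClifford_zero_sq_add (z ^ 2 / 4)).mul_left π).congr_fun fun k => ?_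
    have hcat : ((k + 1 : ℕ) * catalan k : ℝ) = k.centralBinom :=
      mod_cast succ_mul_catalan_eq_centralBinom k
    simp_rw [one_mul]
    rw [integral_sin_sq_pow, ← hcat, Nat.factorial_succ, neg_div', div_pow]
    push_cast
    field_simp
  rw [← hseries.unique hmoments]
  refine intervalIntegral.integral_congr fun θ _ => ?_
  simp only [besselClifford, one_mul]
  refine tsum_congr fun k => ?_
  rw [mul_pow, ← neg_mul, mul_pow]
  ring

lemma integral_cos_sq_mul_cos_mul_sin (t : ℝ) :
    ∫ θ in -(π / 2)..(π / 2), Real.cos θ ^ 2 * Real.cos (2 * t * Real.sin θ) =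
      π / 2 * besselClifford 1 (t ^ 2) := by
  have hseries := hasSum_mul_integral_mul_pow (a := -(π / 2)) (b := π / 2)
    (f := fun θ => Real.cos θ ^ 2) (g := fun θ => Real.sin θ ^ 2) (by fun_prop) (by fun_prop)
    (fun θ => by rw [abs_of_nonneg (sq_nonneg _)]; exact Real.sin_sq_le_one θ)
    (Real.hasSum_cos (2 * t)).summable.abs
  have hmoments : HasSum (fun k : ℕ => (-1) ^ k * (2 * t) ^ (2 * k) / ((2 * k)! : ℝ) *
      ∫ θ in -(π / 2)..(π / 2), Real.cos θ ^ 2 * (Real.sin θ ^ 2) ^ k)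
      (π / 2 * besselClifford 1 (t ^ 2)) := by
    refine ((hasSum_besselClifford 1 (t ^ 2)).mul_left (π / 2)).congr_fun fun k => ?_
    have hcat : ((2 * k)! : ℝ) = k ! * (k + 1)! * catalan k := by
      have hcentral := Nat.choose_mul_factorial_mul_factorial (Nat.le_mul_of_pos_left k two_pos)
      rw [← Nat.centralBinom_eq_two_mul_choose, ← succ_mul_catalan_eq_centralBinom,
        show 2 * k - k = k by omega] at hcentral
      rw [← hcentral, Nat.factorial_succ]
      push_cast
      ring
    have hcat_ne : (catalan k : ℝ) ≠ 0 :=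
      right_ne_zero_of_mul (hcat ▸ Nat.cast_ne_zero.mpr (2 * k).factorial_ne_zero)
    rw [integral_cos_sq_mul_sin_sq_pow, hcat, pow_mul, mul_pow 2 t, mul_pow, neg_pow (t ^ 2),
      show (2 : ℝ) ^ 2 = 4 by norm_num]
    field_simp
  rw [← hseries.unique hmoments]
  refine intervalIntegral.integral_congr fun θ _ => ?_
  rw [← (Real.hasSum_cos (2 * t * Real.sin θ)).tsum_eq]
  congr 1
  refine tsum_congr fun k => ?_
  rw [mul_pow _ (Real.sin θ), pow_mul (Real.sin θ)]
  ring

lemma integral_eq_zero_of_odd {E : Type*} [NormedAddCommGroup E] [NormedSpace ℝ E] {f : ℝ → E}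
    (hf : f.Odd) : ∫ x, f x = 0 := by
  have hneg := integral_neg_eq_self f volume
  simp_rw [hf _, integral_neg] at hneg
  have : IsAddTorsionFree E := .of_isTorsionFree ℝ E
  exact self_eq_neg.mp hneg.symm

lemma fourier_ofReal_of_even {f : ℝ → ℝ} (hf : Integrable f) (heven : f.Even) (w : ℝ) :
    𝓕 (fun x => (f x : ℂ)) w = ∫ x, f x * Real.cos (2 * π * w * x) := by
  have hcos : Integrable fun x => f x * Real.cos (2 * π * w * x) :=
    hf.mul_bdd (c := 1) (by fun_prop : Continuous _).aestronglyMeasurable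
      (.of_forall fun x => Real.abs_cos_le_one _)
  have hsin : Integrable fun x => f x * Real.sin (2 * π * w * x) :=
    hf.mul_bdd (c := 1) (by fun_prop : Continuous _).aestronglyMeasurable
      (.of_forall fun x => Real.abs_sin_le_one _)
  have hodd : (fun x => f x * Real.sin (2 * π * w * x)).Odd := fun x => by
    simp only [heven x, mul_neg, Real.sin_neg]
  have hexp (x : ℝ) : Complex.exp ((-2 * π * x * w : ℝ) * Complex.I) • (f x : ℂ) =
      (f x * Real.cos (2 * π * w * x) : ℝ) -
        (f x * Real.sin (2 * π * w * x) : ℝ) * Complex.I := by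
    rw [show -2 * π * x * w = -(2 * π * w * x) by ring, Complex.exp_mul_I, ← Complex.ofReal_cos,
      ← Complex.ofReal_sin, Real.cos_neg, Real.sin_neg, smul_eq_mul]
    push_cast
    ring
  simp_rw [Real.fourier_real_eq_integral_exp_smul, hexp]
  rw [integral_sub hcos.ofReal (hsin.ofReal.mul_const _), integral_mul_const,
    integral_complex_ofReal, integral_complex_ofReal, integral_eq_zero_of_odd hodd]
  simp

lemma sqrt_one_sub_sq_eq_zero {x : ℝ} (hx : x ∉ Set.Ioc (-1 : ℝ) 1) : √(1 - x ^ 2) = 0 := by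
  refine Real.sqrt_eq_zero_of_nonpos (sub_nonpos.mpr ?_)
  rw [one_le_sq_iff_one_le_abs, le_abs']
  by_contra! hlt
  exact hx ⟨hlt.1, hlt.2.le⟩

lemma continuous_sqrt_one_sub_sq : Continuous fun x : ℝ => √(1 - x ^ 2) := by
  fun_prop

lemma integrable_sqrt_one_sub_sq : Integrable fun x : ℝ => √(1 - x ^ 2) := by
  refine continuous_sqrt_one_sub_sq.integrable_of_hasCompactSupport
    (.intro (isCompact_Icc (a := -1) (b := 1)) fun x hx => ?_)
  exact sqrt_one_sub_sq_eq_zero fun h => hx (Set.Ioc_subset_Icc_self h)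

lemma fourier_sqrt_one_sub_sq (w : ℝ) :
    𝓕 (fun x : ℝ => (√(1 - x ^ 2) : ℂ)) w = (π / 2 * besselClifford 1 ((π * w) ^ 2) : ℝ) := by
  have heven : (fun x : ℝ => √(1 - x ^ 2)).Even := fun x => by simp only [neg_sq]
  have hcos (θ : ℝ) : Real.cos (2 * π * w * θ) = Real.cos (2 * (π * w) * θ) := by ring_nf
  rw [fourier_ofReal_of_even integrable_sqrt_one_sub_sq heven,
    ← setIntegral_eq_integral_of_forall_compl_eq_zero (s := Set.Ioc (-1) 1)
      fun x hx => by rw [sqrt_one_sub_sq_eq_zero hx, zero_mul],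
    ← intervalIntegral.integral_of_le (by norm_num),
    integral_sqrt_one_sub_sq_mul (g := fun x => Real.cos (2 * π * w * x)) (by fun_prop)]
  simp_rw [hcos]
  rw [integral_cos_sq_mul_cos_mul_sin]

lemma integral_besselClifford_one_sq (h : Integrable fun y : ℝ => besselClifford 1 (y ^ 2)) :
    ∫ y : ℝ, besselClifford 1 (y ^ 2) = 2 := by
  set f : ℝ → ℂ := fun x => (√(1 - x ^ 2) : ℂ)
  have hfourier : 𝓕 f = fun w => ((π / 2 * besselClifford 1 ((π * w) ^ 2) : ℝ) : ℂ) :=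
    funext fourier_sqrt_one_sub_sq
  have hint : Integrable (𝓕 f) := by
    rw [hfourier]
    exact ((h.comp_mul_left' Real.pi_ne_zero).const_mul _).ofReal
  have hinv : 𝓕⁻ (𝓕 f) 0 = f 0 := integrable_sqrt_one_sub_sq.ofReal.fourierInv_fourier_eq hint
    (Complex.continuous_ofReal.comp continuous_sqrt_one_sub_sq).continuousAt
  have hscale : ∫ w, besselClifford 1 ((π * w) ^ 2) = π⁻¹ * ∫ y, besselClifford 1 (y ^ 2) := by
    rw [Measure.integral_comp_mul_left (fun y => besselClifford 1 (y ^ 2)),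
      abs_of_pos (by positivity), smul_eq_mul]
  rw [Real.fourierInv_eq', hfourier] at hinv
  simp only [inner_zero_right, mul_zero, Complex.ofReal_zero, zero_mul, Complex.exp_zero,
    one_smul, integral_complex_ofReal, Complex.ofReal_inj, zero_pow two_ne_zero, sub_zero,
    Real.sqrt_one, integral_const_mul, hscale, f] at hinv
  field_simp at hinv
  linarith

end SemicircleFourier

section Bessel

open Asymptotics
open scoped Nat Real

lemma besselJ_natCast (n : ℕ) (z : ℝ) :
    besselJ n z = (z / 2) ^ n * besselClifford n (z ^ 2 / 4) := by
  rw [besselJ, besselClifford, ← tsum_mul_left]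
  refine tsum_congr fun m => ?_
  rw [add_right_comm, ← Nat.cast_add, Real.Gamma_nat_eq_factorial,
    show 2 * (m : ℝ) + n = (2 * m + n : ℕ) by push_cast; ring, Real.rpow_natCast, pow_add, pow_mul,
    show -(z ^ 2 / 4) = -1 * (z / 2) ^ 2 by ring, mul_pow]
  ring

lemma besselJ_zero (z : ℝ) : besselJ 0 z = besselClifford 0 (z ^ 2 / 4) := by
  simpa using besselJ_natCast 0 z

lemma besselJ_one (z : ℝ) : besselJ 1 z = z / 2 * besselClifford 1 (z ^ 2 / 4) := by
  simpa using besselJ_natCast 1 z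

-- The term `m = 0` vanishes because `Real.Gamma 0 = 0`, which matches the convention `1/Γ(0) = 0`.
lemma besselJ_neg_one (z : ℝ) : besselJ (-1) z = -besselJ 1 z := by
  have hsum : HasSum (fun m : ℕ => (-1 : ℝ) ^ m / (m ! * Real.Gamma (m + 1 + -1)) *
      (z / 2) ^ (2 * (m : ℝ) + -1)) (-besselJ 1 z) := by
    rw [← hasSum_nat_add_iff' 1, besselJ_one, ← mul_neg]
    simp only [Finset.sum_range_one, Nat.cast_zero, zero_add, add_neg_cancel, Real.Gamma_zero,
      mul_zero, div_zero, zero_mul, sub_zero]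
    refine ((hasSum_besselClifford 1 (z ^ 2 / 4)).neg.mul_left (z / 2)).congr_fun fun m => ?_
    rw [add_neg_cancel_right, Nat.cast_succ, Real.Gamma_nat_eq_factorial,
      show 2 * ((m : ℝ) + 1) + -1 = (2 * m + 1 : ℕ) by push_cast; ring, Real.rpow_natCast,
      pow_succ (z / 2), pow_mul, show -(z ^ 2 / 4) = -1 * (z / 2) ^ 2 by ring, mul_pow]
    ring
  exact hsum.tsum_eq

lemma mul_besselJ_natCast_add_two (n : ℕ) (z : ℝ) :
    z * besselJ (n + 2) z = 2 * (n + 1) * besselJ (n + 1) z - z * besselJ n z := by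
  have hsucc := besselJ_natCast (n + 1) z
  have hsucc_succ := besselJ_natCast (n + 2) z
  push_cast at hsucc hsucc_succ
  rw [hsucc, hsucc_succ, besselJ_natCast, besselClifford_eq_sub n]
  ring

lemma hasDerivAt_besselJ_natCast (n : ℕ) {z : ℝ} (hz : z ≠ 0) :
    HasDerivAt (besselJ n) (n / z * besselJ n z - besselJ (n + 1) z) z := by
  have hsucc := besselJ_natCast (n + 1) z
  push_cast at hsucc
  have harg : HasDerivAt (fun z : ℝ => z ^ 2 / 4) (z / 2) z := by
    refine ((hasDerivAt_pow 2 z).div_const 4).congr_deriv ?_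
    rw [Nat.cast_ofNat, Nat.add_one_sub_one, pow_one]
    ring
  have hpow := ((hasDerivAt_id z).div_const 2).pow n
  have hmul := hpow.mul ((hasDerivAt_besselClifford n (z ^ 2 / 4)).comp z harg)
  rw [funext (besselJ_natCast n)]
  refine hmul.congr_deriv ?_
  rw [hsucc]
  rcases n with _ | n
  · simp only [Nat.cast_zero, id_eq, zero_tsub, pow_zero, mul_one, zero_mul,
      Function.comp_apply, Pi.one_apply, zero_add, zero_div, pow_one, zero_sub]
    ring
  · simp only [Function.comp_apply, id_eq, Nat.add_sub_cancel, Pi.pow_apply]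
    push_cast
    field_simp
    ring

lemma hasDerivAt_besselJ_zero {z : ℝ} (hz : z ≠ 0) :
    HasDerivAt (besselJ 0) (-besselJ 1 z) z := by
  simpa using hasDerivAt_besselJ_natCast 0 hz

lemma hasDerivAt_besselJ_one {z : ℝ} (hz : z ≠ 0) :
    HasDerivAt (besselJ 1) (besselJ 0 z - besselJ 1 z / z) z := by
  have hrec := mul_besselJ_natCast_add_two 0 z
  have hderiv := hasDerivAt_besselJ_natCast 1 hz
  simp only [Nat.cast_zero, Nat.cast_one, zero_add, mul_one, one_add_one_eq_two] at hrec hderiv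
  refine hderiv.congr_deriv ?_
  field_simp
  linarith

/-- The quantity `z (J_0² + J_1²) - J_0 J_1 + J_0² / (2 z)`; the two correction terms make its
derivative nonpositive and `O(z⁻²)`. -/
noncomputable def besselEnergy (z : ℝ) : ℝ :=
  z * (besselJ 0 z ^ 2 + besselJ 1 z ^ 2) - besselJ 0 z * besselJ 1 z + besselJ 0 z ^ 2 / (2 * z)

lemma hasDerivAt_besselEnergy {z : ℝ} (hz : z ≠ 0) :
    HasDerivAt besselEnergy (-(besselJ 0 z ^ 2 / (2 * z ^ 2))) z := by
  have hzero := hasDerivAt_besselJ_zero hz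
  have hone := hasDerivAt_besselJ_one hz
  refine ((((hasDerivAt_id z).mul ((hzero.pow 2).add (hone.pow 2))).sub (hzero.mul hone)).add
    ((hzero.pow 2).div ((hasDerivAt_id z).const_mul 2) (by simpa))).congr_deriv ?_
  simp only [Pi.add_apply, Pi.pow_apply, one_mul, id_eq, Nat.cast_ofNat,
    Nat.add_one_sub_one, pow_one]
  field_simp
  ring

lemma antitoneOn_besselEnergy : AntitoneOn besselEnergy (Set.Ioi 0) := by
  have hderiv (z : ℝ) (hz : z ∈ Set.Ioi (0 : ℝ)) := hasDerivAt_besselEnergy (ne_of_gt hz)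
  refine antitoneOn_of_deriv_nonpos (convex_Ioi 0)
    (fun z hz => (hderiv z hz).continuousAt.continuousWithinAt)
    (fun z hz => ?_) (fun z hz => ?_) <;> rw [interior_Ioi] at hz
  · exact (hderiv z hz).differentiableAt.differentiableWithinAt
  · rw [(hderiv z hz).deriv]
    exact neg_nonpos.mpr (by positivity)

lemma besselJ_zero_sq_add_besselJ_one_sq_le {z : ℝ} (hz : 1 ≤ z) :
    besselJ 0 z ^ 2 + besselJ 1 z ^ 2 ≤ 2 * besselEnergy 1 * z⁻¹ := by
  have hpos : 0 < z := one_pos.trans_le hz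
  have hmono : besselEnergy z ≤ besselEnergy 1 :=
    antitoneOn_besselEnergy (Set.mem_Ioi.mpr one_pos) hpos hz
  have hquot : 0 ≤ besselJ 0 z ^ 2 / (2 * z) := by positivity
  rw [besselEnergy] at hmono
  rw [← div_eq_mul_inv, le_div_iff₀ hpos]
  nlinarith [sq_nonneg (besselJ 0 z - besselJ 1 z), mul_nonneg (sub_nonneg.mpr hz)
    (add_nonneg (sq_nonneg (besselJ 0 z)) (sq_nonneg (besselJ 1 z)))]

lemma isBigO_rpow_neg_half_of_sq_le {f : ℝ → ℝ} {C : ℝ}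
    (hf : ∀ z, 1 ≤ z → f z ^ 2 ≤ C * z⁻¹) : f =O[atTop] fun z => z ^ (-(1 / 2) : ℝ) := by
  refine IsBigO.of_pow two_ne_zero (IsBigO.of_bound C ?_)
  filter_upwards [eventually_ge_atTop 1] with z hz
  have hsq : (z ^ (-(1 / 2) : ℝ)) ^ 2 = z⁻¹ := by
    rw [← Real.rpow_mul_natCast (by linarith), ← Real.rpow_neg_one]
    norm_num
  rw [Pi.pow_apply, Pi.pow_apply, hsq, Real.norm_of_nonneg (sq_nonneg _),
    Real.norm_of_nonneg (inv_nonneg.mpr (by linarith))]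
  exact hf z hz

lemma isBigO_besselJ_natCast (n : ℕ) :
    besselJ n =O[atTop] fun z => z ^ (-(1 / 2) : ℝ) := by
  induction n using Nat.twoStepInduction with
  | zero =>
    refine isBigO_rpow_neg_half_of_sq_le (C := 2 * besselEnergy 1) fun z hz => ?_
    rw [Nat.cast_zero]
    exact (le_add_of_nonneg_right (sq_nonneg _)).trans (besselJ_zero_sq_add_besselJ_one_sq_le hz)
  | one =>
    refine isBigO_rpow_neg_half_of_sq_le (C := 2 * besselEnergy 1) fun z hz => ?_
    rw [Nat.cast_one]
    exact (le_add_of_nonneg_left (sq_nonneg _)).trans (besselJ_zero_sq_add_besselJ_one_sq_le hz)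
  | more n ih_n ih_succ =>
    have hinv : (fun z : ℝ => 2 * (n + 1) * z⁻¹) =O[atTop] fun _ => (1 : ℝ) :=
      (tendsto_inv_atTop_zero.const_mul _).isBigO_one ℝ
    have hterm : (fun z => 2 * (n + 1) * z⁻¹ * besselJ (n + 1 : ℕ) z) =O[atTop]
        fun z => z ^ (-(1 / 2) : ℝ) :=
      (hinv.mul ih_succ).congr_right fun _ => one_mul _
    refine (hterm.sub ih_n).congr' ?_ .rfl
    filter_upwards [eventually_ne_atTop 0] with z hz
    have hrec := mul_besselJ_natCast_add_two n z
    push_cast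
    field_simp
    linarith

lemma isBigO_besselJ_natCast_mul (m n : ℕ) :
    (fun z => besselJ m z * besselJ n z) =O[atTop] fun z => z⁻¹ := by
  refine ((isBigO_besselJ_natCast m).mul (isBigO_besselJ_natCast n)).congr' .rfl ?_
  filter_upwards [eventually_gt_atTop 0] with z hz
  rw [← Real.rpow_add hz, ← Real.rpow_neg_one]
  norm_num

lemma exists_abs_le_one_add_abs_rpow_neg_of_even {f : ℝ → ℝ} {r : ℝ} (hf : Continuous f)
    (heven : f.Even) (hr : 0 ≤ r) (hO : f =O[atTop] fun y => y ^ (-r)) :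
    ∃ C, ∀ y, |f y| ≤ C * (1 + |y|) ^ (-r) := by
  have hone_add_pos (y : ℝ) : 0 < 1 + |y| := by positivity
  obtain ⟨C₁, hC₁, hfar⟩ := hO.exists_pos
  obtain ⟨a, ha⟩ := eventually_atTop.mp hfar.bound
  have hcont : Continuous fun y => f y * (1 + |y|) ^ r := by
    have hweight : Continuous fun y : ℝ => 1 + |y| := by fun_prop
    exact hf.mul (hweight.rpow_const fun y => .inl (hone_add_pos y).ne')
  obtain ⟨C₂, hC₂⟩ := (isCompact_Icc (a := -max a 1) (b := max a 1)).exists_bound_of_continuousOn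
    hcont.continuousOn
  refine ⟨max (C₁ * 2 ^ r) C₂, fun y => ?_⟩
  rw [Real.rpow_neg (hone_add_pos y).le, ← div_eq_mul_inv, le_div_iff₀ (by positivity)]
  rcases le_or_gt |y| (max a 1) with hy | hy
  · refine le_max_of_le_right ?_
    simpa [abs_mul, abs_of_pos (Real.rpow_pos_of_pos (hone_add_pos y) r)] using hC₂ y (abs_le.mp hy)
  · refine le_max_of_le_left ?_
    have hy_one : 1 < |y| := (le_max_right _ _).trans_lt hy
    have hbound : |f y| ≤ C₁ * |y| ^ (-r) := by
      have hbound_abs := ha |y| ((le_max_left _ _).trans hy.le)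
      have habs : ‖f |y|‖ = |f y| := by
        rcases abs_choice y with hy_abs | hy_abs
        · rw [hy_abs, Real.norm_eq_abs]
        · rw [hy_abs, heven, Real.norm_eq_abs]
      rwa [habs, Real.norm_of_nonneg (by positivity)] at hbound_abs
    calc |f y| * (1 + |y|) ^ r ≤ C₁ * |y| ^ (-r) * (2 * |y|) ^ r := by
          gcongr
          linarith
      _ = C₁ * 2 ^ r := by
          rw [Real.mul_rpow zero_le_two (abs_nonneg y), Real.rpow_neg (abs_nonneg y)]
          field_simp

lemma exists_abs_besselClifford_one_sq_le :
    ∃ C, ∀ y : ℝ, |besselClifford 1 (y ^ 2)| ≤ C * (1 + |y|) ^ (-(3 / 2) : ℝ) := by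
  have hJ : (fun y => besselJ 1 (2 * y)) =O[atTop] fun y => y ^ (-(1 / 2) : ℝ) := by
    have hcomp := (isBigO_besselJ_natCast 1).comp_tendsto
      (tendsto_id.const_mul_atTop (two_pos : (0 : ℝ) < 2))
    rw [Nat.cast_one] at hcomp
    refine hcomp.trans ((isBigO_const_mul_self (2 ^ (-(1 / 2) : ℝ)) _ _).congr' ?_ .rfl)
    filter_upwards [eventually_ge_atTop 0] with y hy using (Real.mul_rpow zero_le_two hy).symm
  refine exists_abs_le_one_add_abs_rpow_neg_of_even
    ((continuous_besselClifford 1).comp (continuous_pow 2)) (fun y => by simp only [neg_sq])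
    (by norm_num) ((hJ.mul (isBigO_refl (fun y : ℝ => y⁻¹) atTop)).congr' ?_ ?_)
  · filter_upwards [eventually_ne_atTop 0] with y hy
    rw [besselJ_one, show (2 * y) ^ 2 / 4 = y ^ 2 by ring]
    field_simp
  · filter_upwards [eventually_gt_atTop 0] with y hy
    rw [← Real.rpow_neg_one, ← Real.rpow_add hy]
    norm_num

lemma tendsto_mul_besselJ_zero_sq_add_besselJ_one_sq :
    Tendsto (fun z => z * (besselJ 0 z ^ 2 + besselJ 1 z ^ 2)) atTop (𝓝 (2 / π)) := by
  obtain ⟨C, hC⟩ := exists_abs_besselClifford_one_sq_le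
  have hcont : Continuous fun y : ℝ => besselClifford 1 (y ^ 2) :=
    (continuous_besselClifford 1).comp (continuous_pow 2)
  have hint : Integrable fun y : ℝ => besselClifford 1 (y ^ 2) :=
    ((integrable_one_add_abs_rpow_neg (by norm_num)).const_mul C).mono'
      hcont.aestronglyMeasurable (.of_forall hC)
  have hlim := (tendsto_mul_integral_comp_mul_sin hcont (by norm_num) hC).div_const π
  rw [integral_besselClifford_one_sq hint] at hlim
  refine hlim.congr fun z => ?_
  rw [integral_besselClifford_one_mul_sin_sq, besselJ_zero, besselJ_one]
  field_simp
  ring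

lemma isBigO_mul_besselJ_zero_sq_add_besselJ_one_sq_sub :
    (fun z => z * (besselJ 0 z ^ 2 + besselJ 1 z ^ 2) - 2 / π) =O[atTop] fun z => z⁻¹ := by
  have hzero_sq : (fun z => besselJ 0 z * besselJ 0 z) =O[atTop] fun z => z⁻¹ := by
    simpa using isBigO_besselJ_natCast_mul 0 0
  have hzero_one : (fun z => besselJ 0 z * besselJ 1 z) =O[atTop] fun z => z⁻¹ := by
    simpa using isBigO_besselJ_natCast_mul 0 1
  have hinv : (fun z : ℝ => z⁻¹) =O[atTop] fun _ => (1 : ℝ) := tendsto_inv_atTop_zero.isBigO_one ℝ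
  have hcorr : (fun z => besselJ 0 z * besselJ 1 z - besselJ 0 z ^ 2 / (2 * z))
      =O[atTop] fun z => z⁻¹ := by
    refine hzero_one.sub ((((hzero_sq.mul hinv).congr_right fun _ => mul_one _).const_mul_left
      (1 / 2)).congr_left fun z => ?_)
    ring
  have hderiv_bound : (fun z => -(besselJ 0 z ^ 2 / (2 * z ^ 2))) =O[atTop]
      fun z => (z ^ 2)⁻¹ := by
    refine ((((hzero_sq.trans hinv).mul (isBigO_refl (fun z : ℝ => (z ^ 2)⁻¹) _)).congr_right
      fun _ => one_mul _).const_mul_left (-(1 / 2))).congr_left fun z => ?_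
    ring
  have hdecomp (z : ℝ) : z * (besselJ 0 z ^ 2 + besselJ 1 z ^ 2) =
      besselEnergy z + (besselJ 0 z * besselJ 1 z - besselJ 0 z ^ 2 / (2 * z)) := by
    rw [besselEnergy]
    ring
  have hlim : Tendsto besselEnergy atTop (𝓝 (2 / π)) := by
    have hsub := tendsto_mul_besselJ_zero_sq_add_besselJ_one_sq.sub
      (hcorr.trans_tendsto tendsto_inv_atTop_zero)
    rw [sub_zero] at hsub
    exact hsub.congr fun z => by rw [hdecomp, add_sub_cancel_right]
  have henergy := isBigO_inv_of_hasDerivAt_of_tendsto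
    ((eventually_ne_atTop 0).mono fun _ => hasDerivAt_besselEnergy) hderiv_bound hlim
  refine (henergy.add hcorr).congr_left fun z => ?_
  rw [hdecomp]
  ring

/-- The Turán determinant `J_n² - J_{n+1} J_{n-1}` of consecutive Bessel functions; at
`z = 2 √x` it is `x` times the hard-edge density. -/
noncomputable def besselTuran (n : ℕ) (z : ℝ) : ℝ :=
  besselJ n z ^ 2 - besselJ (n + 1) z * besselJ (n - 1) z

lemma besselTuran_zero (z : ℝ) : besselTuran 0 z = besselJ 0 z ^ 2 + besselJ 1 z ^ 2 := by
  rw [besselTuran, Nat.cast_zero, zero_add, zero_sub, besselJ_neg_one]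
  ring

lemma mul_besselTuran_succ (n : ℕ) (z : ℝ) :
    z * besselTuran (n + 1) z =
      z * besselTuran n z - 2 * (besselJ n z * besselJ (n + 1 : ℕ) z) := by
  have hrec_succ := mul_besselJ_natCast_add_two n z
  have hrec : z * besselJ (n + 1) z = 2 * n * besselJ n z - z * besselJ (n - 1) z := by
    rcases n with _ | n
    · simp [besselJ_neg_one]
    · have hrec := mul_besselJ_natCast_add_two n z
      push_cast
      rwa [add_sub_cancel_right, add_assoc, one_add_one_eq_two]
  rw [besselTuran, besselTuran]
  push_cast
  rw [add_sub_cancel_right, add_assoc, one_add_one_eq_two]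
  linear_combination (-besselJ n z) * hrec_succ + besselJ (n + 1) z * hrec

lemma isBigO_mul_besselTuran_sub (n : ℕ) :
    (fun z => z * besselTuran n z - 2 / π) =O[atTop] fun z => z⁻¹ := by
  induction n with
  | zero =>
    simp_rw [besselTuran_zero]
    exact isBigO_mul_besselJ_zero_sq_add_besselJ_one_sq_sub
  | succ n ih =>
    refine (ih.sub ((isBigO_besselJ_natCast_mul n (n + 1)).const_mul_left 2)).congr_left fun z => ?_
    rw [mul_besselTuran_succ]
    ring

lemma isBigO_pi_mul_rpow_mul_besselTuran_sub_one (n : ℕ) :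
    (fun x => π * x ^ (3 / 2 : ℝ) * (1 / x * besselTuran n (2 * √x)) - 1) =O[atTop]
      fun x => x ^ (-1 / 2 : ℝ) := by
  have hsqrt : Tendsto (fun x => 2 * √x) atTop atTop :=
    Real.tendsto_sqrt_atTop.const_mul_atTop two_pos
  refine (((isBigO_mul_besselTuran_sub n).comp_tendsto hsqrt).const_mul_left (π / 2)).congr' ?_ ?_
    |>.trans (isBigO_const_mul_self (1 / 2) _ _)
  · filter_upwards [eventually_gt_atTop 0] with x hx
    have hpow : x ^ (3 / 2 : ℝ) = x * √x := by
      rw [Real.sqrt_eq_rpow, ← Real.rpow_one_add' hx.le (by norm_num)]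
      norm_num
    rw [Function.comp_apply, hpow]
    field_simp
  · filter_upwards [eventually_ge_atTop 0] with x hx
    rw [Function.comp_apply, mul_inv, Real.sqrt_eq_rpow, ← Real.rpow_neg hx, neg_div, one_div]

end Bessel

/-- Large-`x` asymptotics of the Bessel density:
`S^{√Bessel}(x,x) = (x^{-3/2}/π)(1 + O(x^{-1/2}))`. -/
theorem bessel_density_asymptotics (ν : ℕ) :
    ∃ C > (0 : ℝ), ∃ x₀ > (0 : ℝ), ∀ x : ℝ, x₀ ≤ x →
      |Real.pi * x ^ ((3 : ℝ) / 2) *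
          ((1 / x) * (besselJ (ν : ℝ) (2 * Real.sqrt x) ^ 2 -
            besselJ ((ν : ℝ) + 1) (2 * Real.sqrt x) *
              besselJ ((ν : ℝ) - 1) (2 * Real.sqrt x))) - 1| ≤
        C * x ^ (-(1 : ℝ) / 2) := by
  obtain ⟨C, hC, hbound⟩ := (isBigO_pi_mul_rpow_mul_besselTuran_sub_one ν).exists_pos
  obtain ⟨a, ha⟩ := eventually_atTop.mp hbound.bound
  refine ⟨C, hC, max a 1, by positivity, fun x hx => ?_⟩
  have hx_pos : 0 < x := one_pos.trans_le ((le_max_right a 1).trans hx)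
  have hle := ha x ((le_max_left a 1).trans hx)
  rwa [Real.norm_eq_abs, Real.norm_of_nonneg (by positivity)] at hle
end

section
/- Let α > −1 and θ > 0 be real. Then lim_{x→+∞} x^{1/(1+θ)} K^{(α,θ)}(x,x) = (1/π) θ^{1/(1+θ)} sin(π/(1+θ)); in particular the leading-order asymptotics of the diagonal of Borodin's hard edge kernel is independent of α. -/
open Filter Topology MeasureTheory

/-!
Wright's function is, up to a factor `1 / π`, the imaginary part of an integral along the upper half
of a Hankel contour. After a translation by the logarithm of a large parameter, the phase of this
integral has a saddle point at `iπ / (1 + b)`, and steepest descent gives an oscillating asymptotic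
formula with an exponential amplitude. The two Wright functions in the kernel have the dual
parameters `1 / θ` and `θ`: their amplitudes cancel, and the product of their cosines is, up to a
constant, `sin (π / (1 + θ))` plus an oscillation, which the integral over `u` averages away.
-/

section HookIntegral

open scoped Real
open Complex (I)

variable {f F : ℂ → ℂ}

lemma integral_comp_line_mul (hf : Continuous f) (hF : ∀ z, HasDerivAt F (f z) z)
    (p v : ℂ) (s t : ℝ) :
    (∫ τ in s..t, f (p + τ * v)) * v = F (p + t * v) - F (p + s * v) := by
  have hline (τ : ℝ) : HasDerivAt (fun τ : ℝ => p + τ * v) v τ := by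
    simpa using ((Complex.ofRealCLM.hasDerivAt (x := τ)).mul_const v).const_add p
  rw [← intervalIntegral.integral_mul_const]
  exact intervalIntegral.integral_eq_sub_of_hasDerivAt (fun τ _ => (hF _).comp τ (hline τ))
    (Continuous.intervalIntegrable (by fun_prop) _ _)

lemma im_primitive_ofReal_eq (hF : ∀ z, HasDerivAt F (f z) z) (hreal : ∀ r : ℝ, (f r).im = 0)
    (r s : ℝ) : (F r).im = (F s).im := by
  have hderiv (x : ℝ) : HasDerivAt (fun x : ℝ => (F x).im) 0 x := by
    simpa [Function.comp_def, hreal] using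
      Complex.imCLM.hasFDerivAt.comp_hasDerivAt x (hF x).comp_ofReal
  exact is_const_of_deriv_eq_zero (fun x => (hderiv x).differentiableAt)
    (fun x => (hderiv x).deriv) r s

/-- The integral of `f` along the hook-shaped contour that rises vertically from `x` to `x + iπ`
and then runs horizontally to `+∞ + iπ`. It is the upper half of a Hankel contour, written in the
logarithmic coordinate. -/
noncomputable def hookIntegral (f : ℂ → ℂ) (x : ℝ) : ℂ :=
  (∫ y in (0 : ℝ)..π, f (x + y * I)) * I + ∫ r in Set.Ioi x, f (r + π * I)

lemma hookIntegral_eq_of_primitive (hf : Continuous f) (hF : ∀ z, HasDerivAt F (f z) z) (x : ℝ) :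
    hookIntegral f x = F (x + π * I) - F x + ∫ r in Set.Ioi x, f (r + π * I) := by
  simp [hookIntegral, integral_comp_line_mul hf hF]

lemma hookIntegral_eq_neg_of_primitive (hf : Continuous f) (hF : ∀ z, HasDerivAt F (f z) z)
    {x : ℝ} (hint : IntegrableOn (fun r : ℝ => f (r + π * I)) (Set.Ioi x))
    (hlim : Tendsto (fun r : ℝ => F (r + π * I)) atTop (𝓝 0)) :
    hookIntegral f x = -F x := by
  have hderiv (r : ℝ) : HasDerivAt (fun r : ℝ => F (r + π * I)) (f (r + π * I)) r := by
    simpa using ((hF (r + π * I)).comp_add_const (r : ℂ) (π * I)).comp_ofReal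
  rw [hookIntegral_eq_of_primitive hf hF,
    integral_Ioi_of_hasDerivAt_of_tendsto' (fun r _ => hderiv r) hint hlim]
  ring

/-- Cauchy's theorem: since `f` is real on the real axis, only the real part of the integral sees
where on that axis the contour starts. -/
lemma im_hookIntegral_eq_of_path (hf : Differentiable ℂ f) (hreal : ∀ r : ℝ, (f r).im = 0)
    {p v : ℂ} {s t x₀ x y : ℝ} (hs : p + s * v = x₀) (ht : p + t * v = x + y * I) :
    (hookIntegral f x).im = ((∫ τ in s..t, f (p + τ * v)) * v +
      (∫ η in y..π, f (x + η * I)) * I + ∫ r in Set.Ioi x, f (r + π * I)).im := by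
  obtain ⟨F, hF⟩ := hf.isExactOn_univ
  replace hF (z : ℂ) := hF z (Set.mem_univ z)
  rw [hookIntegral_eq_of_primitive hf.continuous hF, integral_comp_line_mul hf.continuous hF,
    integral_comp_line_mul hf.continuous hF, hs, ht]
  simp only [Complex.add_im, Complex.sub_im, im_primitive_ofReal_eq hF hreal x₀ x]
  ring

lemma im_hookIntegral_eq (hf : Differentiable ℂ f) (hreal : ∀ r : ℝ, (f r).im = 0)
    (hint : ∀ x : ℝ, IntegrableOn (fun r : ℝ => f (r + π * I)) (Set.Ioi x)) (x y : ℝ) :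
    (hookIntegral f x).im = (hookIntegral f y).im := by
  obtain ⟨F, hF⟩ := hf.isExactOn_univ
  replace hF (z : ℂ) := hF z (Set.mem_univ z)
  have hhor : ∫ r in x..y, f (r + π * I) = F (y + π * I) - F (x + π * I) := by
    simpa [add_comm] using integral_comp_line_mul hf.continuous hF (π * I) 1 x y
  rw [hookIntegral_eq_of_primitive hf.continuous hF, hookIntegral_eq_of_primitive hf.continuous hF,
    ← intervalIntegral.integral_interval_add_Ioi (hint x) (hint y), hhor]
  simp only [Complex.add_im, Complex.sub_im, im_primitive_ofReal_eq hF hreal x y]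
  ring

lemma hookIntegral_const_mul (c : ℂ) (f : ℂ → ℂ) (x : ℝ) :
    hookIntegral (fun w => c * f w) x = c * hookIntegral f x := by
  simp only [hookIntegral, intervalIntegral.integral_const_mul, integral_const_mul]
  ring

lemma hookIntegral_sub {g : ℂ → ℂ} (hf : Continuous f) (hg : Continuous g) {x : ℝ}
    (hfi : IntegrableOn (fun r : ℝ => f (r + π * I)) (Set.Ioi x))
    (hgi : IntegrableOn (fun r : ℝ => g (r + π * I)) (Set.Ioi x)) :
    hookIntegral (fun w => f w - g w) x = hookIntegral f x - hookIntegral g x := by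
  simp only [hookIntegral]
  rw [intervalIntegral.integral_sub (Continuous.intervalIntegrable (by fun_prop) _ _)
    (Continuous.intervalIntegrable (by fun_prop) _ _), integral_sub hfi hgi]
  ring

lemma hookIntegral_comp_add (f : ℂ → ℂ) (c x : ℝ) :
    hookIntegral (fun w => f (w + c)) x = hookIntegral f (x + c) := by
  have hhor : ∫ r in Set.Ioi x, f (r + π * I + c) = ∫ r in Set.Ioi (x + c), f (r + π * I) := by
    have := (measurePreserving_add_right volume c).setIntegral_preimage_emb
      (measurableEmbedding_addRight c) (fun r : ℝ => f (r + π * I)) (Set.Ioi (x + c))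
    simpa [add_right_comm] using this
  simp only [hookIntegral, hhor, Complex.ofReal_add, add_right_comm (x : ℂ) (c : ℂ)]

end HookIntegral

section ReciprocalGamma

open scoped Real
open Complex (I)

lemma tendsto_exp_neg_mul_exp_add_mul {R : ℝ} (hR : 0 < R) (k : ℝ) :
    Tendsto (fun r : ℝ => Real.exp (-(R * Real.exp r) + k * r)) atTop (𝓝 0) := by
  have hlin : Tendsto (fun r : ℝ => k * (r * Real.exp (-r)) - R) atTop (𝓝 (-R)) := by
    simpa using ((Real.tendsto_pow_mul_exp_neg_atTop_nhds_zero 1).const_mul k).sub_const R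
  refine Real.tendsto_exp_atBot.comp
    ((Real.tendsto_exp_atTop.atTop_mul_neg (neg_neg_of_pos hR) hlin).congr fun r => ?_)
  rw [Real.exp_neg]
  field_simp
  ring

lemma integrableOn_exp_neg_mul_exp_add_mul {R : ℝ} (hR : 0 < R) (k x : ℝ) :
    IntegrableOn (fun r : ℝ => Real.exp (-(R * Real.exp r) + k * r)) (Set.Ioi x) := by
  refine integrable_of_isBigO_exp_neg one_pos (by fun_prop)
    (Asymptotics.isBigO_of_div_tendsto_nhds (by simp) 0 ?_)
  refine (tendsto_exp_neg_mul_exp_add_mul hR (k + 1)).congr fun r => ?_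
  rw [Pi.div_apply, ← Real.exp_sub]
  ring_nf

lemma exp_add_pi_mul_I (r : ℝ) : Complex.exp (r + π * I) = -(Real.exp r : ℂ) := by
  rw [Complex.exp_add, Complex.exp_pi_mul_I, Complex.ofReal_exp, mul_neg_one]

/-- The integrand `e^{e^w} e^{(1-z)w}` of Hankel's formula for `1 / Γ(z)`, that is
`e^s s^{-z} ds` in the logarithmic coordinate `s = e^w`. -/
noncomputable def hankelIntegrand (z : ℝ) (w : ℂ) : ℂ := Complex.exp (Complex.exp w + (1 - z) * w)

@[fun_prop]
lemma differentiable_hankelIntegrand (z : ℝ) : Differentiable ℂ (hankelIntegrand z) := by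
  unfold hankelIntegrand
  fun_prop

@[fun_prop]
lemma continuous_hankelIntegrand (z : ℝ) : Continuous (hankelIntegrand z) :=
  (differentiable_hankelIntegrand z).continuous

lemma hankelIntegrand_ofReal_im (z r : ℝ) : (hankelIntegrand z r).im = 0 := by
  have : hankelIntegrand z r = (Real.exp (Real.exp r + (1 - z) * r) : ℝ) := by
    simp [hankelIntegrand]
  rw [this, Complex.ofReal_im]

lemma norm_hankelIntegrand (z : ℝ) (w : ℂ) :
    ‖hankelIntegrand z w‖ = Real.exp (Real.exp w.re * Real.cos w.im + (1 - z) * w.re) := by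
  simp [hankelIntegrand, Complex.norm_exp, Complex.exp_re]

lemma hankelIntegrand_add_pi_mul_I (z r : ℝ) : hankelIntegrand z (r + π * I) =
    (Real.exp (-Real.exp r + (1 - z) * r) : ℝ) * Complex.exp ((1 - z) * π * I) := by
  rw [hankelIntegrand, exp_add_pi_mul_I]
  push_cast
  rw [← Complex.exp_add]
  ring_nf

lemma integrableOn_hankelIntegrand (z x : ℝ) :
    IntegrableOn (fun r : ℝ => hankelIntegrand z (r + π * I)) (Set.Ioi x) := by
  simp only [hankelIntegrand_add_pi_mul_I]
  have := integrableOn_exp_neg_mul_exp_add_mul one_pos (1 - z) x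
  simp only [one_mul] at this
  exact Integrable.mul_const (Integrable.ofReal this) _

lemma hasDerivAt_hankelIntegrand (z : ℝ) (w : ℂ) : HasDerivAt (hankelIntegrand (z + 1))
    (hankelIntegrand z w - z * hankelIntegrand (z + 1) w) w := by
  have hexp : HasDerivAt (fun w => Complex.exp w + (1 - (z + 1 : ℝ)) * w)
      (Complex.exp w + (1 - (z + 1 : ℝ)) * 1) w :=
    (Complex.hasDerivAt_exp w).add ((hasDerivAt_id w).const_mul _)
  refine hexp.cexp.congr_deriv ?_
  have : hankelIntegrand z w = hankelIntegrand (z + 1) w * Complex.exp w := by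
    rw [hankelIntegrand, hankelIntegrand, ← Complex.exp_add]
    push_cast
    ring_nf
  rw [this, hankelIntegrand]
  push_cast
  ring

lemma im_hookIntegral_hankelIntegrand_eq (z x y : ℝ) :
    (hookIntegral (hankelIntegrand z) x).im = (hookIntegral (hankelIntegrand z) y).im :=
  im_hookIntegral_eq (differentiable_hankelIntegrand z) (hankelIntegrand_ofReal_im z)
    (integrableOn_hankelIntegrand z) x y

lemma im_hookIntegral_hankelIntegrand_add_one (z x : ℝ) :
    (hookIntegral (hankelIntegrand z) x).im =
      z * (hookIntegral (hankelIntegrand (z + 1)) x).im := by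
  have hlim : Tendsto (fun r : ℝ => hankelIntegrand (z + 1) (r + π * I)) atTop (𝓝 0) := by
    simp only [hankelIntegrand_add_pi_mul_I]
    have := tendsto_exp_neg_mul_exp_add_mul one_pos (1 - (z + 1))
    simp only [one_mul] at this
    simpa only [Function.comp_def, Complex.ofReal_zero, zero_mul] using
      ((Complex.continuous_ofReal.tendsto 0).comp this).mul_const
        (Complex.exp ((1 - (z + 1 : ℝ)) * π * I))
  have hint := (integrableOn_hankelIntegrand (z + 1) x).const_mul (z : ℂ)
  have hprim := hookIntegral_eq_neg_of_primitive (by fun_prop) (hasDerivAt_hankelIntegrand z)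
    ((integrableOn_hankelIntegrand z x).sub hint) hlim
  rw [hookIntegral_sub (g := fun w => z * hankelIntegrand (z + 1) w) (by fun_prop) (by fun_prop)
    (integrableOn_hankelIntegrand z x) hint, hookIntegral_const_mul] at hprim
  have him := congrArg Complex.im hprim
  rw [Complex.sub_im, Complex.im_ofReal_mul, Complex.neg_im, hankelIntegrand_ofReal_im] at him
  linarith

lemma tendsto_vertical_hankelIntegrand {z : ℝ} (hz : z < 1) :
    Tendsto (fun x : ℝ => (∫ y in (0 : ℝ)..π, hankelIntegrand z (x + y * I)) * I) atBot (𝓝 0) := by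
  have hbound (x : ℝ) : ‖(∫ y in (0 : ℝ)..π, hankelIntegrand z (x + y * I)) * I‖ ≤
      Real.exp (Real.exp x) * Real.exp ((1 - z) * x) * |π - 0| := by
    rw [norm_mul, Complex.norm_I, mul_one, ← Real.exp_add]
    refine intervalIntegral.norm_integral_le_of_norm_le_const fun y _ => ?_
    rw [norm_hankelIntegrand]
    have : Real.exp x * Real.cos y ≤ Real.exp x :=
      mul_le_of_le_one_right (Real.exp_pos x).le (Real.cos_le_one y)
    simpa using this
  refine squeeze_zero_norm hbound ?_
  have hexp : Tendsto (fun x : ℝ => Real.exp ((1 - z) * x)) atBot (𝓝 0) :=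
    Real.tendsto_exp_atBot.comp (tendsto_id.const_mul_atBot (sub_pos.2 hz))
  simpa using (((Real.continuous_exp.tendsto 0).comp Real.tendsto_exp_atBot).mul hexp).mul_const
    |π - 0|

lemma tendsto_integral_exp_neg_exp_add_mul {s : ℝ} (hs : 0 < s) :
    Tendsto (fun x : ℝ => ∫ r in Set.Ioi x, Real.exp (-Real.exp r + s * r)) atBot
      (𝓝 (Real.Gamma s)) := by
  have hsubst (x : ℝ) : ∫ r in Set.Ioi x, Real.exp (-Real.exp r + s * r) =
      ∫ y in Set.Ioi (Real.exp x), Real.exp (-y) * y ^ (s - 1) := by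
    rw [← integral_comp_exp_Ioi]
    refine integral_congr_ae (.of_forall fun r => ?_)
    simp only [smul_eq_mul, ← Real.exp_mul, ← Real.exp_add]
    ring_nf
  have hcover := (aecover_Ioi_of_Ioi (μ := volume) Real.tendsto_exp_atBot)
    |>.integral_tendsto_of_countably_generated (Real.GammaIntegral_convergent hs)
  rw [← Real.Gamma_eq_integral hs] at hcover
  refine hcover.congr fun x => ?_
  rw [hsubst, Measure.restrict_restrict measurableSet_Ioi, Set.Ioi_inter_Ioi,
    sup_of_le_left (Real.exp_pos x).le]

lemma im_hookIntegral_hankelIntegrand_of_lt_one {z : ℝ} (h0 : 0 < z) (h1 : z < 1) (x : ℝ) :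
    (hookIntegral (hankelIntegrand z) x).im = π / Real.Gamma z := by
  have hhor : Tendsto (fun x : ℝ => ∫ r in Set.Ioi x, hankelIntegrand z (r + π * I)) atBot
      (𝓝 (Real.Gamma (1 - z) * Complex.exp ((1 - z) * π * I))) := by
    simp only [hankelIntegrand_add_pi_mul_I, integral_mul_const, integral_complex_ofReal]
    exact ((Complex.continuous_ofReal.tendsto _).comp
      (tendsto_integral_exp_neg_exp_add_mul (sub_pos.2 h1))).mul_const _
  have hlim : Tendsto (fun y => (hookIntegral (hankelIntegrand z) y).im) atBot
      (𝓝 (0 + Real.Gamma (1 - z) * Complex.exp ((1 - z) * π * I)).im) :=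
    (Complex.continuous_im.tendsto _).comp ((tendsto_vertical_hankelIntegrand h1).add hhor)
  simp only [im_hookIntegral_hankelIntegrand_eq z _ x] at hlim
  have hphase : (Complex.exp ((1 - z) * π * I)).im = Real.sin (π * z) := by
    rw [show ((1 : ℂ) - z) * π = ((π - π * z : ℝ) : ℂ) by push_cast; ring,
      Complex.exp_ofReal_mul_I_im, Real.sin_pi_sub]
  have hsin : 0 < Real.sin (π * z) := Real.sin_pos_of_pos_of_lt_pi (by positivity)
    (mul_lt_of_lt_one_right Real.pi_pos h1)
  have hreflection := Real.Gamma_mul_Gamma_one_sub z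
  rw [eq_div_iff hsin.ne'] at hreflection
  rw [tendsto_nhds_unique tendsto_const_nhds hlim, zero_add, Complex.im_ofReal_mul, hphase,
    eq_div_iff (Real.Gamma_pos_of_pos h0).ne']
  linarith

lemma im_hookIntegral_hankelIntegrand_one (x : ℝ) :
    (hookIntegral (hankelIntegrand 1) x).im = π := by
  let V (ε : ℝ) : ℝ := ((∫ y in (0 : ℝ)..π, Complex.exp (ε * Complex.exp (y * I))) * I).im
  have hV (x : ℝ) : (hookIntegral (hankelIntegrand 1) x).im = V (Real.exp x) := by
    have hhor : (∫ r in Set.Ioi x, hankelIntegrand 1 (r + π * I)).im = 0 := by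
      simp only [hankelIntegrand_add_pi_mul_I, Complex.ofReal_one, sub_self, zero_mul,
        Complex.exp_zero, mul_one, integral_complex_ofReal, Complex.ofReal_im]
    rw [hookIntegral, Complex.add_im, hhor, add_zero]
    simp [V, hankelIntegrand, Complex.exp_add]
  have hcont : Continuous V := by
    refine Complex.continuous_im.comp (Continuous.mul ?_ continuous_const)
    exact intervalIntegral.continuous_parametric_intervalIntegral_of_continuous' (by fun_prop) _ _
  have hlim : Tendsto (fun y => (hookIntegral (hankelIntegrand 1) y).im) atBot (𝓝 (V 0)) := by
    simp only [hV]
    exact (hcont.tendsto 0).comp Real.tendsto_exp_atBot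
  simp only [im_hookIntegral_hankelIntegrand_eq 1 _ x] at hlim
  rw [tendsto_nhds_unique tendsto_const_nhds hlim]
  simp [V]

lemma im_hookIntegral_hankelIntegrand {z : ℝ} (hz : 0 < z) (x : ℝ) :
    (hookIntegral (hankelIntegrand z) x).im = π / Real.Gamma z := by
  obtain ⟨n, hn⟩ := exists_nat_ge z
  induction n generalizing z with
  | zero => exact absurd hz (not_lt.2 (by simpa using hn))
  | succ n ih =>
    rcases lt_trichotomy z 1 with hlt | rfl | hgt
    · exact im_hookIntegral_hankelIntegrand_of_lt_one hz hlt x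
    · rw [im_hookIntegral_hankelIntegrand_one, Real.Gamma_one, div_one]
    · have hpos : 0 < z - 1 := sub_pos.2 hgt
      have hrec := im_hookIntegral_hankelIntegrand_add_one (z - 1) x
      have hGamma := Real.Gamma_add_one hpos.ne'
      rw [sub_add_cancel] at hrec hGamma
      rw [ih hpos (by push_cast at hn; linarith)] at hrec
      have := Real.Gamma_pos_of_pos hpos
      rw [hGamma]
      field_simp at hrec ⊢
      linarith

end ReciprocalGamma

section WrightRepresentation

open scoped Real
open Complex (I)

/-- The integrand `exp (e^w + (1-a) w - x e^{-bw})` of the contour representation of Wright's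
function `J_{a,b}(x)`. -/
noncomputable def wrightIntegrand (a b x : ℝ) (w : ℂ) : ℂ :=
  hankelIntegrand a w * Complex.exp (-x * Complex.exp (-(b * w)))

lemma hankelIntegrand_add_mul_natCast (a b : ℝ) (j : ℕ) (w : ℂ) :
    hankelIntegrand (a + b * j) w = hankelIntegrand a w * Complex.exp (-(b * w)) ^ j := by
  rw [hankelIntegrand, hankelIntegrand, ← Complex.exp_nat_mul, ← Complex.exp_add]
  push_cast
  ring_nf

lemma norm_hankelIntegrand_add_mul_le (a : ℝ) {b x₀ : ℝ} (hb : 0 ≤ b) {w : ℂ} (hw : x₀ ≤ w.re)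
    (j : ℕ) : ‖hankelIntegrand (a + b * j) w‖ ≤
      Real.exp (-(b * x₀)) ^ j * ‖hankelIntegrand a w‖ := by
  have hexp : ‖Complex.exp (-(b * w))‖ ≤ Real.exp (-(b * x₀)) := by
    rw [Complex.norm_exp, Complex.neg_re, Complex.re_ofReal_mul]
    gcongr
  rw [hankelIntegrand_add_mul_natCast, norm_mul, norm_pow, mul_comm]
  gcongr

lemma hasSum_wrightIntegrand (a b x : ℝ) (w : ℂ) :
    HasSum (fun j : ℕ => (((-x) ^ j / j.factorial : ℝ) : ℂ) * hankelIntegrand (a + b * j) w)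
      (wrightIntegrand a b x w) := by
  have hexp := NormedSpace.expSeries_div_hasSum_exp (-x * Complex.exp (-(b * w)))
  rw [← Complex.exp_eq_exp_ℂ] at hexp
  refine (hexp.mul_left (hankelIntegrand a w)).congr_fun fun j => ?_
  rw [hankelIntegrand_add_mul_natCast]
  push_cast
  ring

lemma hasSum_integral_wrightIntegrand {μ : Measure ℝ} {γ : ℝ → ℂ} (hγ : Continuous γ)
    {a b x₀ : ℝ} (hb : 0 ≤ b) (hre : ∀ᵐ t ∂μ, x₀ ≤ (γ t).re)
    (hint : Integrable (fun t => hankelIntegrand a (γ t)) μ) (x : ℝ) :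
    HasSum (fun j : ℕ =>
        (((-x) ^ j / j.factorial : ℝ) : ℂ) * ∫ t, hankelIntegrand (a + b * j) (γ t) ∂μ)
      (∫ t, wrightIntegrand a b x (γ t) ∂μ) := by
  have hle (j : ℕ) : ∀ᵐ t ∂μ, ‖hankelIntegrand (a + b * j) (γ t)‖ ≤
      Real.exp (-(b * x₀)) ^ j * ‖hankelIntegrand a (γ t)‖ :=
    hre.mono fun t ht => norm_hankelIntegrand_add_mul_le a hb ht j
  have hint_j (j : ℕ) : Integrable (fun t => hankelIntegrand (a + b * j) (γ t)) μ :=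
    (hint.norm.const_mul _).mono' (by fun_prop) (hle j)
  have hnorm (j : ℕ) : ∫ t, ‖(((-x) ^ j / j.factorial : ℝ) : ℂ) *
      hankelIntegrand (a + b * j) (γ t)‖ ∂μ ≤
      (|x| * Real.exp (-(b * x₀))) ^ j / j.factorial * ∫ t, ‖hankelIntegrand a (γ t)‖ ∂μ := by
    rw [← integral_const_mul]
    refine integral_mono_ae ((hint_j j).const_mul _).norm (hint.norm.const_mul _) ?_
    filter_upwards [hle j] with t ht
    calc ‖(((-x) ^ j / j.factorial : ℝ) : ℂ) * hankelIntegrand (a + b * j) (γ t)‖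
        = |x| ^ j / j.factorial * ‖hankelIntegrand (a + b * j) (γ t)‖ := by simp
      _ ≤ |x| ^ j / j.factorial * (Real.exp (-(b * x₀)) ^ j * ‖hankelIntegrand a (γ t)‖) := by
          gcongr
      _ = _ := by ring
  have hsum : Summable fun j : ℕ => ∫ t, ‖(((-x) ^ j / j.factorial : ℝ) : ℂ) *
      hankelIntegrand (a + b * j) (γ t)‖ ∂μ :=
    .of_nonneg_of_le (fun j => integral_nonneg fun t => norm_nonneg _) hnorm
      ((Real.summable_pow_div_factorial _).mul_right _)
  have hswap := hasSum_integral_of_summable_integral_norm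
    (fun j => (hint_j j).const_mul (((-x) ^ j / j.factorial : ℝ) : ℂ)) hsum
  simpa only [integral_const_mul, (hasSum_wrightIntegrand a b x _).tsum_eq] using hswap

lemma hasSum_hookIntegral_wrightIntegrand (a : ℝ) {b : ℝ} (hb : 0 ≤ b) (x x₀ : ℝ) :
    HasSum (fun j : ℕ =>
        (((-x) ^ j / j.factorial : ℝ) : ℂ) * hookIntegral (hankelIntegrand (a + b * j)) x₀)
      (hookIntegral (wrightIntegrand a b x) x₀) := by
  have hver := hasSum_integral_wrightIntegrand (μ := volume.restrict (Set.Ioc 0 π))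
    (γ := fun y : ℝ => x₀ + y * I) (a := a) (x₀ := x₀) (by fun_prop) hb (by simp)
    (Continuous.integrableOn_Ioc (by fun_prop)) x
  have hhor := hasSum_integral_wrightIntegrand (μ := volume.restrict (Set.Ioi x₀))
    (γ := fun r : ℝ => r + π * I) (x₀ := x₀) (by fun_prop) hb
    ((ae_restrict_mem measurableSet_Ioi).mono fun r hr => by simpa using le_of_lt hr)
    (integrableOn_hankelIntegrand a x₀) x
  simp only [hookIntegral, intervalIntegral.integral_of_le Real.pi_pos.le]
  exact ((hver.mul_right I).add hhor).congr_fun fun j => by ring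

lemma wrightJ_eq_im_hookIntegral {a b : ℝ} (ha : 0 < a) (hb : 0 ≤ b) (x x₀ : ℝ) :
    wrightJ a b x = (1 / π) * (hookIntegral (wrightIntegrand a b x) x₀).im := by
  have him := Complex.hasSum_im (hasSum_hookIntegral_wrightIntegrand a hb x x₀)
  rw [wrightJ, ← (him.mul_left (1 / π)).tsum_eq]
  refine tsum_congr fun j => ?_
  rw [Complex.im_ofReal_mul, im_hookIntegral_hankelIntegrand (by positivity)]
  field_simp

lemma one_div_six_le_Gamma {z : ℝ} (hz : 0 < z) : 1 / 6 ≤ Real.Gamma z := by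
  have hmono := Real.Gamma_strictMonoOn_Ici.monotoneOn
  rcases le_or_gt 2 z with h2 | h2
  · have := hmono Set.self_mem_Ici h2 h2
    rw [Real.Gamma_two] at this
    linarith
  · have hshift := hmono Set.self_mem_Ici (by simp only [Set.mem_Ici]; linarith)
      (by linarith : 2 ≤ z + 1 + 1)
    rw [Real.Gamma_add_one (by positivity), Real.Gamma_add_one hz.ne', Real.Gamma_two] at hshift
    have hfactor : (z + 1) * z ≤ 6 := by nlinarith
    nlinarith [Real.Gamma_pos_of_pos hz]

lemma continuous_wrightJ {a b : ℝ} (ha : 0 < a) (hb : 0 ≤ b) : Continuous (wrightJ a b) := by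
  refine continuous_iff_continuousAt.2 fun x₀ => ?_
  suffices ContinuousOn (wrightJ a b) (Metric.ball 0 (|x₀| + 1)) from
    this.continuousAt (Metric.isOpen_ball.mem_nhds (by simp))
  refine continuousOn_tsum (u := fun j : ℕ => 6 * ((|x₀| + 1) ^ j / j.factorial))
    (fun j => by fun_prop) ((Real.summable_pow_div_factorial _).mul_left _) fun j x hx => ?_
  have hx : |x| ≤ |x₀| + 1 := (mem_ball_zero_iff.1 hx).le
  have hGamma := one_div_six_le_Gamma (z := a + b * j) (by positivity)
  have hpos : 0 < Real.Gamma (a + b * j) := by linarith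
  calc ‖(-x) ^ j / (j.factorial * Real.Gamma (a + b * j))‖
      = |x| ^ j / j.factorial * (1 / Real.Gamma (a + b * j)) := by
        simp [abs_of_pos hpos, div_eq_mul_inv]
        ring
    _ ≤ (|x₀| + 1) ^ j / j.factorial * 6 := by
        gcongr
        rw [div_le_iff₀ hpos]
        linarith
    _ = _ := mul_comm _ _

end WrightRepresentation

section LaplaceMethod

open Asymptotics

lemma exists_le_neg_mul_sq {g : ℝ → ℝ} {s : Set ℝ} {c : ℝ} (hs : IsCompact s)
    (hg : ContinuousOn g s) (hc : 0 < c)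
    (hquad : (fun τ => g τ + c * τ ^ 2) =o[𝓝 0] fun τ => τ ^ 2)
    (hneg : ∀ τ ∈ s, τ ≠ 0 → g τ < 0) :
    ∃ κ > 0, ∀ τ ∈ s, g τ ≤ -κ * τ ^ 2 := by
  refine hs.induction_on (p := fun t => ∃ κ > 0, ∀ τ ∈ t, g τ ≤ -κ * τ ^ 2)
    ⟨1, one_pos, by simp⟩ (fun t u htu ⟨κ, hκ, hu⟩ => ⟨κ, hκ, fun τ hτ => hu τ (htu hτ)⟩) ?_ ?_
  · rintro t u ⟨κ, hκ, ht⟩ ⟨κ', hκ', hu⟩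
    refine ⟨min κ κ', lt_min hκ hκ', fun τ hτ => ?_⟩
    rcases hτ with hτ | hτ
    · exact (ht τ hτ).trans (by gcongr; exact min_le_left _ _)
    · exact (hu τ hτ).trans (by gcongr; exact min_le_right _ _)
  · intro x hx
    rcases eq_or_ne x 0 with rfl | hx0
    · refine ⟨_, mem_nhdsWithin_of_mem_nhds (hquad.bound (half_pos hc)), c / 2, half_pos hc,
        fun τ hτ => ?_⟩
      have hτ : |g τ + c * τ ^ 2| ≤ c / 2 * |τ ^ 2| := hτ
      rw [abs_of_nonneg (sq_nonneg τ)] at hτ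
      linarith [(le_abs_self _).trans hτ]
    · have hgx := hneg x hx hx0
      have hκ : 0 < -g x / (2 * x ^ 2) := div_pos (neg_pos.2 hgx) (by positivity)
      have hlim : Tendsto (fun τ => g τ + -g x / (2 * x ^ 2) * τ ^ 2) (𝓝[s] x) (𝓝 (g x / 2)) := by
        have : g x / 2 = g x + -g x / (2 * x ^ 2) * x ^ 2 := by field_simp; ring
        rw [this]
        exact ((hg x hx).add (by fun_prop : ContinuousWithinAt _ s x)).tendsto
      have hneg := hlim.eventually_lt_const (div_neg_of_neg_of_pos hgx two_pos)
      refine ⟨_, hneg, _, hκ, fun τ hτ => ?_⟩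
      have : g τ + -g x / (2 * x ^ 2) * τ ^ 2 < 0 := hτ
      linarith

lemma tendsto_mul_comp_div_sqrt {k : ℝ → ℂ} {c : ℝ}
    (hquad : (fun τ => k τ + c / 2 * τ ^ 2) =o[𝓝 0] fun τ : ℝ => τ ^ 2) (t : ℝ) :
    Tendsto (fun R : ℝ => R * k (t / √R)) atTop (𝓝 (-(c / 2) * t ^ 2)) := by
  have hzero : Tendsto (fun R => t / √R) atTop (𝓝 0) := Real.tendsto_sqrt_atTop.const_div_atTop t
  have hsq : ∀ᶠ R : ℝ in atTop, R * (t / √R) ^ 2 = t ^ 2 := by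
    filter_upwards [eventually_gt_atTop 0] with R hR
    rw [div_pow, Real.sq_sqrt hR.le, mul_div_cancel₀ _ hR.ne']
  have hsmall : Tendsto (fun R : ℝ => R * (k (t / √R) + c / 2 * (t / √R : ℝ) ^ 2)) atTop
      (𝓝 0) := by
    have hR := Complex.isBigO_ofReal_left.2 (isBigO_refl (fun R : ℝ => R) atTop)
    have := (hR.mul_isLittleO (hquad.comp_tendsto hzero)).trans_eventuallyEq hsq
    exact (isLittleO_one_iff ℝ).1 (this.trans_isBigO (isBigO_const_const _ one_ne_zero _))
  rw [← zero_add (-((c : ℂ) / 2) * t ^ 2)]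
  refine (hsmall.add_const _).congr' ?_
  filter_upwards [hsq] with R hR
  have hRc : (R : ℂ) * (t / √R : ℝ) ^ 2 = t ^ 2 := by exact_mod_cast hR
  linear_combination (c / 2 : ℂ) * hRc

lemma mul_intervalIntegral_eq_integral_indicator (f : ℝ → ℂ) {a b c : ℝ} (hab : a ≤ b)
    (hc : 0 < c) : c * ∫ τ in a..b, f τ =
      ∫ t, (Set.Ioc (a * c) (b * c)).indicator (fun t => f (t / c)) t := by
  rw [integral_indicator measurableSet_Ioc, ← intervalIntegral.integral_of_le (by gcongr),
    intervalIntegral.integral_comp_div f hc.ne', mul_div_cancel_right₀ _ hc.ne',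
    mul_div_cancel_right₀ _ hc.ne', Complex.real_smul]

lemma integral_cexp_neg_div_two_mul_sq (c : ℝ) :
    ∫ t : ℝ, Complex.exp (-(c / 2) * t ^ 2) = √(2 * Real.pi / c) := by
  have hreal (t : ℝ) : Complex.exp (-(c / 2) * t ^ 2) = (Real.exp (-(c / 2) * t ^ 2) : ℝ) := by
    push_cast
    rfl
  simp only [hreal, integral_complex_ofReal, integral_gaussian]
  rw [div_div_eq_mul_div, mul_comm Real.pi]

/-- The Laplace integrand `e^{R k(τ)} h(τ)` on `(a, b]`, at the rescaled point `τ = t / √R` and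
extended by zero. -/
noncomputable def rescaledLaplaceIntegrand (k h : ℝ → ℂ) (a b R : ℝ) : ℝ → ℂ :=
  (Set.Ioc (a * √R) (b * √R)).indicator fun t => Complex.exp (R * k (t / √R)) * h (t / √R)

variable {k h : ℝ → ℂ} {a b c : ℝ}

lemma norm_rescaledLaplaceIntegrand_le {κ H R : ℝ}
    (hk : ∀ τ ∈ Set.Icc a b, (k τ).re ≤ -κ * τ ^ 2) (hh : ∀ τ ∈ Set.Icc a b, ‖h τ‖ ≤ H)
    (hH : 0 ≤ H) (hR : 0 < R) (t : ℝ) :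
    ‖rescaledLaplaceIntegrand k h a b R t‖ ≤ Real.exp (-κ * t ^ 2) * H := by
  rw [rescaledLaplaceIntegrand, norm_indicator_eq_indicator_norm]
  refine Set.indicator_apply_le' (fun ht => ?_) fun _ => by positivity
  have hsqrt : 0 < √R := Real.sqrt_pos.2 hR
  have hmem : t / √R ∈ Set.Icc a b :=
    ⟨(le_div_iff₀ hsqrt).2 ht.1.le, (div_le_iff₀ hsqrt).2 ht.2⟩
  have hexp : R * (k (t / √R)).re ≤ -κ * t ^ 2 := calc
    R * (k (t / √R)).re ≤ R * (-κ * (t / √R) ^ 2) := by gcongr; exact hk _ hmem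
    _ = -κ * t ^ 2 := by rw [div_pow, Real.sq_sqrt hR.le]; field_simp
  rw [norm_mul, Complex.norm_exp, Complex.re_ofReal_mul]
  gcongr
  exact hh _ hmem

lemma tendsto_rescaledLaplaceIntegrand (hh : Continuous h) (ha : a < 0) (hb : 0 < b)
    (hquad : (fun τ => k τ + c / 2 * τ ^ 2) =o[𝓝 0] fun τ : ℝ => τ ^ 2) (t : ℝ) :
    Tendsto (fun R => rescaledLaplaceIntegrand k h a b R t) atTop
      (𝓝 (Complex.exp (-(c / 2) * t ^ 2) * h 0)) := by
  have hzero : Tendsto (fun R => t / √R) atTop (𝓝 0) := Real.tendsto_sqrt_atTop.const_div_atTop t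
  refine (((Complex.continuous_exp.tendsto _).comp (tendsto_mul_comp_div_sqrt hquad t)).mul
    ((hh.tendsto 0).comp hzero)).congr' ?_
  filter_upwards [hzero.eventually (Ioo_mem_nhds ha hb), eventually_gt_atTop 0] with R ht hR
  have hsqrt : 0 < √R := Real.sqrt_pos.2 hR
  have hmem : t ∈ Set.Ioc (a * √R) (b * √R) :=
    ⟨(lt_div_iff₀ hsqrt).1 ht.1, ((div_lt_iff₀ hsqrt).1 ht.2).le⟩
  simp only [rescaledLaplaceIntegrand, Set.indicator_of_mem hmem, Function.comp_apply]

theorem tendsto_sqrt_mul_integral_exp_mul (hk : Continuous k) (hh : Continuous h)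
    (ha : a < 0) (hb : 0 < b) (hc : 0 < c)
    (hquad : (fun τ => k τ + c / 2 * τ ^ 2) =o[𝓝 0] fun τ : ℝ => τ ^ 2)
    (hneg : ∀ τ ∈ Set.Icc a b, τ ≠ 0 → (k τ).re < 0) :
    Tendsto (fun R : ℝ => (√R : ℂ) * ∫ τ in a..b, Complex.exp (R * k τ) * h τ) atTop
      (𝓝 (h 0 * √(2 * Real.pi / c))) := by
  have hquad_re : (fun τ => (k τ).re + c / 2 * τ ^ 2) =o[𝓝 0] fun τ : ℝ => τ ^ 2 := by
    refine (IsBigO.of_bound 1 (.of_forall fun τ => ?_)).trans_isLittleO hquad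
    have hre : (k τ).re + c / 2 * τ ^ 2 = (k τ + c / 2 * τ ^ 2).re := by norm_cast
    rw [hre, one_mul, Real.norm_eq_abs]
    exact Complex.abs_re_le_norm _
  obtain ⟨κ, hκ, hbound⟩ :=
    exists_le_neg_mul_sq isCompact_Icc (by fun_prop) (half_pos hc) hquad_re hneg
  obtain ⟨H, hH⟩ : ∃ H, ∀ τ ∈ Set.Icc a b, ‖h τ‖ ≤ H :=
    isCompact_Icc.exists_bound_of_continuousOn hh.continuousOn
  have hH0 : 0 ≤ H := (norm_nonneg _).trans (hH 0 ⟨ha.le, hb.le⟩)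
  have hlim : Tendsto (fun R => ∫ t, rescaledLaplaceIntegrand k h a b R t) atTop
      (𝓝 (∫ t : ℝ, Complex.exp (-(c / 2) * t ^ 2) * h 0)) :=
    tendsto_integral_filter_of_dominated_convergence (fun t => Real.exp (-κ * t ^ 2) * H)
      (.of_forall fun R => (Continuous.aestronglyMeasurable (by fun_prop)).indicator
        measurableSet_Ioc)
      ((eventually_gt_atTop 0).mono fun R hR =>
        .of_forall (norm_rescaledLaplaceIntegrand_le hbound hH hH0 hR))
      ((integrable_exp_neg_mul_sq hκ).mul_const H)
      (.of_forall (tendsto_rescaledLaplaceIntegrand hh ha hb hquad))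
  rw [integral_mul_const, integral_cexp_neg_div_two_mul_sq, mul_comm] at hlim
  refine hlim.congr' ?_
  filter_upwards [eventually_gt_atTop 0] with R hR
  exact (mul_intervalIntegral_eq_integral_indicator (fun τ => Complex.exp (R * k τ) * h τ)
    (ha.trans hb).le (Real.sqrt_pos.2 hR)).symm

end LaplaceMethod

section SaddleGeometry

open scoped Real
open Complex (I)
open Asymptotics Set

lemma sin_le_sin_of_le_of_le_pi_sub {x y : ℝ} (hy : -(π / 2) ≤ y) (hyx : y ≤ x)
    (hxy : x ≤ π - y) : Real.sin y ≤ Real.sin x := by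
  rcases le_total x (π / 2) with hx | hx
  · exact Real.sin_le_sin_of_le_of_le_pi_div_two hy hx hyx
  · rw [← Real.sin_pi_sub x]
    exact Real.sin_le_sin_of_le_of_le_pi_div_two hy (by linarith) (by linarith)

lemma exp_mul_tan_half_le_inv_cos {p : ℝ} (hp₀ : 0 ≤ p) (hp : p < π / 2) :
    Real.exp (p * Real.tan (p / 2)) ≤ (Real.cos p)⁻¹ := by
  have hcos : 0 < Real.cos p := Real.cos_pos_of_mem_Ioo ⟨by linarith, hp⟩
  have htan : p / 2 ≤ Real.tan (p / 2) := Real.le_tan (by linarith) (by linarith)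
  set t := Real.tan (p / 2)
  have hcos_eq : Real.cos p = (1 - t ^ 2) / (1 + t ^ 2) :=
    Real.cos_eq_two_mul_tan_half_div_one_sub_tan_half_sq p (by linarith)
  have ht : t ^ 2 < 1 := by
    rw [hcos_eq, div_pos_iff_of_pos_right (by positivity)] at hcos
    linarith
  have hlog : 2 * t ^ 2 ≤ Real.log (1 + t ^ 2) - Real.log (1 - t ^ 2) := by
    have hsum := Real.hasSum_log_sub_log_of_abs_lt_one (x := t ^ 2)
      (by rwa [abs_of_nonneg (sq_nonneg t)])
    simpa using le_hasSum hsum 0 fun k _ => by positivity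
  rw [hcos_eq, inv_div, ← Real.le_log_iff_exp_le (div_pos (by positivity) (by linarith)),
    Real.log_div (by positivity) (by linarith)]
  nlinarith

lemma isLittleO_cexp_sub_taylor (d : ℂ) :
    (fun τ : ℝ => Complex.exp (τ * d) - (1 + τ * d + (τ * d) ^ 2 / 2)) =o[𝓝 0]
      fun τ : ℝ => τ ^ 2 := by
  have hlim : Tendsto (fun τ : ℝ => τ * d) (𝓝 0) (𝓝 0) := by
    simpa using (Complex.continuous_ofReal.mul_const d).tendsto 0
  have hsq : (fun τ : ℝ => (τ * d) ^ 2) =O[𝓝 0] fun τ : ℝ => τ ^ 2 :=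
    ((isBigO_const_mul_self d _ _).pow 2 |>.congr_left fun τ => by ring).trans
      ((Complex.isBigO_ofReal_left.2 (isBigO_refl (fun τ : ℝ => τ) _)).pow 2)
  simpa [Finset.sum_range_succ, Function.comp_def] using
    ((Complex.exp_sub_sum_range_succ_isLittleO_pow 2).comp_tendsto hlim).trans_isBigO hsq

/-- The phase of the oscillatory integral representing Wright's Bessel function, after the large
parameter has been scaled out. -/
noncomputable def phase (b : ℝ) (w : ℂ) : ℂ := Complex.exp w - Complex.exp (-(b * w)) / b

/-- The imaginary part of the saddle point of `phase b` in the strip `0 < Im w < π`; the saddle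
point itself is purely imaginary. -/
noncomputable def saddleAngle (b : ℝ) : ℝ := π / (1 + b)

/-- The unit direction of steepest descent of `Re (phase b)` at the saddle point. -/
noncomputable def saddleDirection (b : ℝ) : ℂ :=
  ⟨Real.sin (saddleAngle b / 2), Real.cos (saddleAngle b / 2)⟩

/-- The line through the saddle point in the direction of steepest descent. -/
noncomputable def descentLine (b τ : ℝ) : ℂ := saddleAngle b * I + τ * saddleDirection b

/-- The real part of `phase b` at its saddle point. -/
noncomputable def saddleHeight (b : ℝ) : ℝ := (1 + 1 / b) * Real.cos (saddleAngle b)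

/-- The imaginary part of `phase b` at its saddle point. -/
noncomputable def saddleFrequency (b : ℝ) : ℝ := (1 + 1 / b) * Real.sin (saddleAngle b)

/-- The height at which the contour leaves the line of steepest descent. -/
noncomputable def exitHeight (b : ℝ) : ℝ := min (2 * saddleAngle b) π

/-- The parameter at which `descentLine b` meets the real axis. -/
noncomputable def entryTime (b : ℝ) : ℝ := -(saddleAngle b / Real.cos (saddleAngle b / 2))

/-- The parameter at which `descentLine b` reaches the height `exitHeight b`. -/
noncomputable def exitTime (b : ℝ) : ℝ :=
  (exitHeight b - saddleAngle b) / Real.cos (saddleAngle b / 2)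

/-- The real part of the point at which the contour leaves the line of steepest descent. -/
noncomputable def exitAbscissa (b : ℝ) : ℝ := exitTime b * Real.sin (saddleAngle b / 2)

variable {b : ℝ}

lemma continuous_phase (b : ℝ) : Continuous (phase b) := by
  unfold phase
  fun_prop

lemma phase_re (b x y : ℝ) : (phase b (x + y * I)).re =
    Real.exp x * Real.cos y - Real.exp (-(b * x)) * Real.cos (b * y) / b := by
  simp [phase, Complex.exp_re, Complex.div_ofReal_re]

lemma hasDerivAt_phase (hb : b ≠ 0) (w : ℂ) :
    HasDerivAt (phase b) (Complex.exp w + Complex.exp (-(b * w))) w := by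
  have hexp := ((hasDerivAt_id w).const_mul (b : ℂ)).neg.cexp.div_const (b : ℂ)
  have hbc : (b : ℂ) ≠ 0 := by exact_mod_cast hb
  exact ((Complex.hasDerivAt_exp w).sub hexp).congr_deriv (by simp; field_simp; ring)

lemma saddleAngle_pos (hb : 0 < b) : 0 < saddleAngle b := by
  unfold saddleAngle
  positivity

lemma one_add_mul_saddleAngle (hb : 0 < b) : (1 + b) * saddleAngle b = π := by
  unfold saddleAngle
  field_simp

lemma saddleAngle_lt_pi (hb : 0 < b) : saddleAngle b < π := by
  nlinarith [one_add_mul_saddleAngle hb, saddleAngle_pos hb]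

lemma sin_half_saddleAngle_pos (hb : 0 < b) : 0 < Real.sin (saddleAngle b / 2) :=
  Real.sin_pos_of_pos_of_lt_pi (by linarith [saddleAngle_pos hb])
    (by linarith [saddleAngle_lt_pi hb, Real.pi_pos])

lemma cos_half_saddleAngle_pos (hb : 0 < b) : 0 < Real.cos (saddleAngle b / 2) :=
  Real.cos_pos_of_mem_Ioo
    ⟨by linarith [saddleAngle_pos hb, Real.pi_pos], by linarith [saddleAngle_lt_pi hb]⟩

lemma saddleAngle_lt_exitHeight (hb : 0 < b) : saddleAngle b < exitHeight b :=
  lt_min (by linarith [saddleAngle_pos hb]) (saddleAngle_lt_pi hb)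

lemma entryTime_neg (hb : 0 < b) : entryTime b < 0 :=
  neg_neg_of_pos (div_pos (saddleAngle_pos hb) (cos_half_saddleAngle_pos hb))

lemma exitTime_pos (hb : 0 < b) : 0 < exitTime b :=
  div_pos (sub_pos.2 (saddleAngle_lt_exitHeight hb)) (cos_half_saddleAngle_pos hb)

lemma exitAbscissa_pos (hb : 0 < b) : 0 < exitAbscissa b :=
  mul_pos (exitTime_pos hb) (sin_half_saddleAngle_pos hb)

lemma descentLine_eq (b τ : ℝ) :
    descentLine b τ = (τ * Real.sin (saddleAngle b / 2) : ℝ) +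
      (saddleAngle b + τ * Real.cos (saddleAngle b / 2) : ℝ) * I := by
  apply Complex.ext <;>
    simp only [descentLine, saddleDirection, Complex.add_re, Complex.add_im, Complex.re_ofReal_mul,
      Complex.im_ofReal_mul, Complex.I_re, Complex.I_im, Complex.ofReal_re, Complex.ofReal_im] <;>
    ring

lemma descentLine_entryTime (hb : 0 < b) :
    descentLine b (entryTime b) = (entryTime b * Real.sin (saddleAngle b / 2) : ℝ) := by
  have him : saddleAngle b + entryTime b * Real.cos (saddleAngle b / 2) = 0 := by
    rw [entryTime, neg_mul, div_mul_cancel₀ _ (cos_half_saddleAngle_pos hb).ne', add_neg_cancel]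
  rw [descentLine_eq, him, Complex.ofReal_zero, zero_mul, add_zero]

lemma descentLine_exitTime (hb : 0 < b) :
    descentLine b (exitTime b) = exitAbscissa b + exitHeight b * I := by
  have him : saddleAngle b + exitTime b * Real.cos (saddleAngle b / 2) = exitHeight b := by
    rw [exitTime, div_mul_cancel₀ _ (cos_half_saddleAngle_pos hb).ne', add_sub_cancel]
  rw [descentLine_eq, him, exitAbscissa]

lemma cexp_neg_mul_saddleAngle (hb : 0 < b) :
    Complex.exp (-(b * (saddleAngle b * I))) = -Complex.exp (saddleAngle b * I) := by
  have hexponent : -((b : ℂ) * (saddleAngle b * I)) = saddleAngle b * I - π * I := by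
    rw [← one_add_mul_saddleAngle hb]
    push_cast
    ring
  rw [hexponent, Complex.exp_sub_pi_mul_I]

lemma phase_saddleAngle (hb : 0 < b) :
    phase b (saddleAngle b * I) = saddleHeight b + saddleFrequency b * I := by
  rw [phase, cexp_neg_mul_saddleAngle hb, saddleHeight, saddleFrequency, Complex.exp_mul_I]
  push_cast
  ring

lemma cexp_half_saddleAngle_mul_saddleDirection (b : ℝ) :
    Complex.exp ((saddleAngle b / 2 : ℝ) * I) * saddleDirection b = I := by
  apply Complex.ext
  · simp only [saddleDirection, Complex.mul_re, Complex.exp_ofReal_mul_I_re,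
      Complex.exp_ofReal_mul_I_im, Complex.I_re]
    ring
  · simp only [saddleDirection, Complex.mul_im, Complex.exp_ofReal_mul_I_re,
      Complex.exp_ofReal_mul_I_im, Complex.I_im]
    linarith [Real.sin_sq_add_cos_sq (saddleAngle b / 2)]

lemma cexp_saddleAngle_mul_saddleDirection_sq (b : ℝ) :
    Complex.exp (saddleAngle b * I) * saddleDirection b ^ 2 = -1 := by
  have hexp : Complex.exp (saddleAngle b * I) = Complex.exp ((saddleAngle b / 2 : ℝ) * I) ^ 2 := by
    rw [← Complex.exp_nat_mul]
    push_cast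
    congr 1
    ring
  rw [hexp, ← mul_pow, cexp_half_saddleAngle_mul_saddleDirection, Complex.I_sq]

lemma phase_descentLine_sub_isLittleO (hb : 0 < b) :
    (fun τ : ℝ => phase b (descentLine b τ) - phase b (saddleAngle b * I) +
      ((1 + b : ℝ) : ℂ) / 2 * τ ^ 2) =o[𝓝 0] fun τ : ℝ => τ ^ 2 := by
  have hbc : (b : ℂ) ≠ 0 := by exact_mod_cast hb.ne'
  have hreflected :=
    (isLittleO_cexp_sub_taylor (-(b * saddleDirection b))).const_mul_left (b : ℂ)⁻¹
  have htaylor := ((isLittleO_cexp_sub_taylor (saddleDirection b)).add hreflected).const_mul_left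
    (Complex.exp (saddleAngle b * I))
  refine htaylor.congr_left fun τ => ?_
  have hexp : Complex.exp (-(b * (saddleAngle b * I + τ * saddleDirection b))) =
      -Complex.exp (saddleAngle b * I) * Complex.exp (τ * -(b * saddleDirection b)) := by
    rw [← cexp_neg_mul_saddleAngle hb, ← Complex.exp_add]
    congr 1
    ring
  rw [phase, phase, descentLine, hexp, Complex.exp_add, cexp_neg_mul_saddleAngle hb]
  push_cast
  field_simp
  linear_combination (-(b + 1) * b * τ ^ 2) * cexp_saddleAngle_mul_saddleDirection_sq b

lemma hasDerivAt_re_phase_descentLine (hb : b ≠ 0) (τ : ℝ) :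
    HasDerivAt (fun τ : ℝ => (phase b (descentLine b τ)).re)
      (Real.exp (-(b * (τ * Real.sin (saddleAngle b / 2)))) *
          Real.sin (saddleAngle b / 2 + b * (saddleAngle b + τ * Real.cos (saddleAngle b / 2))) -
        Real.exp (τ * Real.sin (saddleAngle b / 2)) *
          Real.sin (saddleAngle b / 2 + τ * Real.cos (saddleAngle b / 2))) τ := by
  have hline : HasDerivAt (fun τ => descentLine b τ) (saddleDirection b) τ := by
    simpa [descentLine] using
      ((Complex.ofRealCLM.hasDerivAt (x := τ)).mul_const (saddleDirection b)).const_add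
        (saddleAngle b * I)
  have hre := Complex.reCLM.hasFDerivAt.comp_hasDerivAt τ ((hasDerivAt_phase hb _).comp τ hline)
  refine hre.congr_deriv ?_
  set r := τ * Real.sin (saddleAngle b / 2) with hr
  set δ := τ * Real.cos (saddleAngle b / 2) with hδ
  have hsin : Real.sin (saddleAngle b / 2 + δ) =
      Real.sin (saddleAngle b + δ) * Real.cos (saddleAngle b / 2) -
        Real.cos (saddleAngle b + δ) * Real.sin (saddleAngle b / 2) := by
    rw [← Real.sin_sub]
    congr 1
    ring
  rw [descentLine_eq, ← hr, ← hδ, hsin, Real.sin_add]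
  simp [Complex.exp_re, Complex.exp_im, saddleDirection, -Complex.ofReal_add]
  ring

lemma strictMonoOn_re_phase_descentLine (hb : 0 < b) :
    StrictMonoOn (fun τ => (phase b (descentLine b τ)).re) (Icc (entryTime b) 0) := by
  refine strictMonoOn_of_deriv_pos (convex_Icc _ _)
    (fun τ _ => (hasDerivAt_re_phase_descentLine hb.ne' τ).continuousAt.continuousWithinAt)
    fun τ hτ => ?_
  rw [interior_Icc] at hτ
  rw [(hasDerivAt_re_phase_descentLine hb.ne' τ).deriv]
  have hφ := one_add_mul_saddleAngle hb
  have hsin := sin_half_saddleAngle_pos hb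
  have hδ₀ : -saddleAngle b < τ * Real.cos (saddleAngle b / 2) := by
    have hτ₁ := hτ.1
    rwa [entryTime, ← neg_div, div_lt_iff₀ (cos_half_saddleAngle_pos hb)] at hτ₁
  have hδ : τ * Real.cos (saddleAngle b / 2) < 0 :=
    mul_neg_of_neg_of_pos hτ.2 (cos_half_saddleAngle_pos hb)
  have hr : τ * Real.sin (saddleAngle b / 2) < 0 := mul_neg_of_neg_of_pos hτ.2 hsin
  set δ := τ * Real.cos (saddleAngle b / 2)
  set r := τ * Real.sin (saddleAngle b / 2)
  have hfst : Real.sin (saddleAngle b / 2) ≤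
      Real.sin (saddleAngle b / 2 + b * (saddleAngle b + δ)) :=
    sin_le_sin_of_le_of_le_pi_sub (by linarith [saddleAngle_pos hb, Real.pi_pos]) (by nlinarith)
      (by nlinarith)
  have hsnd : Real.sin (saddleAngle b / 2 + δ) ≤ Real.sin (saddleAngle b / 2) :=
    Real.sin_le_sin_of_le_of_le_pi_div_two (by linarith [saddleAngle_lt_pi hb])
      (by linarith [saddleAngle_lt_pi hb]) (by linarith)
  have hexp : 1 < Real.exp (-(b * r)) := Real.one_lt_exp_iff.2 (by nlinarith)
  have hexp' : Real.exp r < 1 := Real.exp_lt_one_iff.2 hr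
  nlinarith [Real.exp_pos r]

lemma strictAntiOn_re_phase_descentLine (hb : 0 < b) :
    StrictAntiOn (fun τ => (phase b (descentLine b τ)).re) (Icc 0 (exitTime b)) := by
  refine strictAntiOn_of_deriv_neg (convex_Icc _ _)
    (fun τ _ => (hasDerivAt_re_phase_descentLine hb.ne' τ).continuousAt.continuousWithinAt)
    fun τ hτ => ?_
  rw [interior_Icc] at hτ
  rw [(hasDerivAt_re_phase_descentLine hb.ne' τ).deriv]
  have hφ := one_add_mul_saddleAngle hb
  have hsin := sin_half_saddleAngle_pos hb
  have hδ₁ : τ * Real.cos (saddleAngle b / 2) < exitHeight b - saddleAngle b :=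
    (lt_div_iff₀ (cos_half_saddleAngle_pos hb)).1 hτ.2
  have hexit₁ : exitHeight b ≤ 2 * saddleAngle b := min_le_left _ _
  have hexit₂ : exitHeight b ≤ π := min_le_right _ _
  have hδ : 0 < τ * Real.cos (saddleAngle b / 2) := mul_pos hτ.1 (cos_half_saddleAngle_pos hb)
  have hr : 0 < τ * Real.sin (saddleAngle b / 2) := mul_pos hτ.1 hsin
  set δ := τ * Real.cos (saddleAngle b / 2)
  set r := τ * Real.sin (saddleAngle b / 2)
  have hfst : Real.sin (saddleAngle b / 2 + b * (saddleAngle b + δ)) ≤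
      Real.sin (saddleAngle b / 2) := by
    have := sin_le_sin_of_le_of_le_pi_sub (y := -(saddleAngle b / 2))
      (x := saddleAngle b / 2 + b * (saddleAngle b + δ) - π) (by linarith) (by nlinarith)
      (by nlinarith)
    rw [Real.sin_sub_pi, Real.sin_neg] at this
    linarith
  have hsnd : Real.sin (saddleAngle b / 2) ≤ Real.sin (saddleAngle b / 2 + δ) :=
    sin_le_sin_of_le_of_le_pi_sub (by linarith) (by linarith) (by linarith)
  have hexp : Real.exp (-(b * r)) < 1 := Real.exp_lt_one_iff.2 (by nlinarith)
  have hexp' : 1 < Real.exp r := Real.one_lt_exp_iff.2 hr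
  nlinarith [Real.exp_pos (-(b * r))]

lemma re_phase_descentLine_lt (hb : 0 < b) {τ : ℝ} (hτ : τ ∈ Icc (entryTime b) (exitTime b))
    (hτ₀ : τ ≠ 0) : (phase b (descentLine b τ)).re < saddleHeight b := by
  have hsaddle : (phase b (descentLine b 0)).re = saddleHeight b := by
    simp [descentLine, phase_saddleAngle hb]
  rw [← hsaddle]
  rcases hτ₀.lt_or_gt with h | h
  · exact strictMonoOn_re_phase_descentLine hb ⟨hτ.1, h.le⟩ ⟨(entryTime_neg hb).le, le_rfl⟩ h
  · exact strictAntiOn_re_phase_descentLine hb ⟨le_rfl, (exitTime_pos hb).le⟩ ⟨h.le, hτ.2⟩ h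

lemma mul_two_mul_sq_sub_one_add_lt {c i ρ : ℝ} (hc₀ : 0 < c) (hc₁ : c < 1) (hi : i < 1)
    (hρ₁ : 1 ≤ ρ) (hρ : ρ ≤ c⁻¹) : ρ * (2 * c ^ 2 - 1) + i < (1 + i) * c := by
  suffices ρ * (2 * c ^ 2 - 1) ≤ 2 * c - 1 ∨ ρ * (2 * c ^ 2 - 1) ≤ 2 * c ^ 2 - 1 by
    rcases this with h | h <;>
      nlinarith [mul_pos (sub_pos.2 hc₁) (sub_pos.2 hi), mul_pos (sub_pos.2 hc₁) hc₀]
  rcases le_total 0 (2 * c ^ 2 - 1) with h | h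
  · left
    calc ρ * (2 * c ^ 2 - 1) ≤ c⁻¹ * (2 * c ^ 2 - 1) := by gcongr
      _ = 2 * c - c⁻¹ := by field_simp
      _ ≤ 2 * c - 1 := by linarith
  · right
    nlinarith

lemma re_phase_exitAbscissa_lt_of_one_lt (hb : 1 < b) {y : ℝ} (hy : exitHeight b ≤ y)
    (hyπ : y ≤ π) : (phase b (exitAbscissa b + y * I)).re < saddleHeight b := by
  have hb₀ : 0 < b := one_pos.trans hb
  have hφ₀ := saddleAngle_pos hb₀
  have hφ : 2 * saddleAngle b < π := by nlinarith [one_add_mul_saddleAngle hb₀]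
  have hexit : exitHeight b = 2 * saddleAngle b := min_eq_left hφ.le
  have habscissa : exitAbscissa b = saddleAngle b * Real.tan (saddleAngle b / 2) := by
    rw [exitAbscissa, exitTime, hexit, Real.tan_eq_sin_div_cos]
    ring
  have hcos : Real.cos y ≤ 2 * Real.cos (saddleAngle b) ^ 2 - 1 := by
    rw [← Real.cos_two_mul]
    exact Real.cos_le_cos_of_nonneg_of_le_pi (by linarith) hyπ (by linarith)
  have hsnd : -(Real.exp (-(b * exitAbscissa b)) * Real.cos (b * y) / b) ≤ 1 / b := by
    rw [← neg_div]
    gcongr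
    have hexp : Real.exp (-(b * exitAbscissa b)) ≤ 1 :=
      Real.exp_le_one_iff.2 (by nlinarith [exitAbscissa_pos hb₀])
    nlinarith [Real.exp_pos (-(b * exitAbscissa b)), Real.neg_one_le_cos (b * y)]
  have hfst : Real.exp (exitAbscissa b) * (2 * Real.cos (saddleAngle b) ^ 2 - 1) + 1 / b <
      (1 + 1 / b) * Real.cos (saddleAngle b) := by
    refine mul_two_mul_sq_sub_one_add_lt
      (Real.cos_pos_of_mem_Ioo ⟨by linarith, by linarith⟩) ?_ ((div_lt_one hb₀).2 hb)
      (Real.one_le_exp (exitAbscissa_pos hb₀).le) ?_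
    · rw [← Real.cos_zero]
      exact Real.cos_lt_cos_of_nonneg_of_le_pi le_rfl (by linarith) hφ₀
    · rw [habscissa]
      exact exp_mul_tan_half_le_inv_cos hφ₀.le (by linarith)
  rw [phase_re, saddleHeight]
  nlinarith [mul_le_mul_of_nonneg_left hcos (Real.exp_pos (exitAbscissa b)).le]

lemma re_phase_exitAbscissa_lt (hb : 0 < b) {y : ℝ} (hy : exitHeight b ≤ y) (hyπ : y ≤ π) :
    (phase b (exitAbscissa b + y * I)).re < saddleHeight b := by
  rcases le_or_gt b 1 with hb₁ | hb₁
  · have hexit : exitHeight b = π :=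
      min_eq_right (by nlinarith [one_add_mul_saddleAngle hb, saddleAngle_pos hb])
    rw [le_antisymm (hyπ.trans hexit.ge) hy, ← descentLine_exitTime hb]
    exact re_phase_descentLine_lt hb
      ⟨(entryTime_neg hb).le.trans (exitTime_pos hb).le, le_rfl⟩ (exitTime_pos hb).ne'
  · exact re_phase_exitAbscissa_lt_of_one_lt hb₁ hy hyπ

lemma antitoneOn_re_phase_add_pi_mul_I (hb : 0 < b) :
    AntitoneOn (fun r : ℝ => (phase b (r + π * I)).re) (Ici 0) := by
  have hderiv (r : ℝ) : HasDerivAt (fun r : ℝ => (phase b (r + π * I)).re)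
      (Real.exp (-(b * r)) * Real.cos (b * π) - Real.exp r) r := by
    have hphase :=
      ((hasDerivAt_phase hb.ne' (r + π * I)).comp_add_const (r : ℂ) (π * I)).comp_ofReal
    refine (Complex.reCLM.hasFDerivAt.comp_hasDerivAt r hphase).congr_deriv ?_
    simp [Complex.exp_re]
    ring
  refine antitoneOn_of_deriv_nonpos (convex_Ici 0)
    (fun r _ => (hderiv r).continuousAt.continuousWithinAt)
    (fun r _ => (hderiv r).differentiableAt.differentiableWithinAt) fun r hr => ?_
  rw [interior_Ici] at hr
  rw [(hderiv r).deriv, sub_nonpos]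
  calc Real.exp (-(b * r)) * Real.cos (b * π) ≤ Real.exp (-(b * r)) * 1 := by
        gcongr
        exact Real.cos_le_one _
    _ ≤ Real.exp r := by
        rw [mul_one]
        exact Real.exp_le_exp.2 (by nlinarith [hr.out])

lemma exists_pos_re_phase_le_saddleHeight_sub (hb : 0 < b) : ∃ η > 0,
    (∀ y ∈ Icc (exitHeight b) π, (phase b (exitAbscissa b + y * I)).re ≤ saddleHeight b - η) ∧
    ∀ r, exitAbscissa b ≤ r → (phase b (r + π * I)).re ≤ saddleHeight b - η := by
  have hπ : π ∈ Icc (exitHeight b) π := ⟨min_le_right _ _, le_rfl⟩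
  have hcont : Continuous fun y : ℝ => (phase b (exitAbscissa b + y * I)).re :=
    Complex.continuous_re.comp ((continuous_phase b).comp (by fun_prop))
  obtain ⟨y₀, hy₀, hmax⟩ := isCompact_Icc.exists_isMaxOn ⟨π, hπ⟩ hcont.continuousOn
  refine ⟨_, sub_pos.2 (re_phase_exitAbscissa_lt hb hy₀.1 hy₀.2), fun y hy => ?_, fun r hr => ?_⟩
  · rw [sub_sub_cancel]
    exact hmax hy
  · rw [sub_sub_cancel]
    exact (antitoneOn_re_phase_add_pi_mul_I hb (exitAbscissa_pos hb).le
      ((exitAbscissa_pos hb).le.trans hr) hr).trans (hmax hπ)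

end SaddleGeometry

section WrightAsymptotics

open scoped Real
open Complex (I)
open Set

/-- The contour integrand for Wright's Bessel function at the argument `R ^ (1 + b) / b`, after the
translation by `log R` that makes `phase b` independent of `R`. -/
noncomputable def saddleIntegrand (a b R : ℝ) (w : ℂ) : ℂ :=
  Complex.exp (R * phase b w + (1 - a) * w)

/-- The contour integral of `saddleIntegrand` along the line of steepest descent, parametrized by
the displacement from the saddle point and divided by the value of the integrand there. -/
noncomputable def descentIntegral (a b R : ℝ) : ℂ :=
  ∫ τ in entryTime b..exitTime b,
    Complex.exp (R * (phase b (descentLine b τ) - phase b (saddleAngle b * I))) *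
      Complex.exp ((1 - a) * (τ * saddleDirection b))

/-- The part of the contour integral of `saddleIntegrand` along which `phase b` stays below its
saddle value: up from the line of steepest descent to height `π`, then horizontally to infinity. -/
noncomputable def tailIntegral (a b R : ℝ) : ℂ :=
  (∫ y in exitHeight b..π, saddleIntegrand a b R (exitAbscissa b + y * I)) * I +
    ∫ r in Ioi (exitAbscissa b), saddleIntegrand a b R (r + π * I)

variable {a b R : ℝ}

@[fun_prop]
lemma differentiable_saddleIntegrand (a b R : ℝ) : Differentiable ℂ (saddleIntegrand a b R) := by
  unfold saddleIntegrand phase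
  fun_prop

lemma saddleIntegrand_ofReal_im (a b R r : ℝ) : (saddleIntegrand a b R r).im = 0 := by
  have hreal : saddleIntegrand a b R r = (Real.exp
      (R * (Real.exp r - Real.exp (-(b * r)) / b) + (1 - a) * r) : ℝ) := by
    push_cast [saddleIntegrand, phase]
    rfl
  rw [hreal, Complex.ofReal_im]

lemma norm_saddleIntegrand (a b R x y : ℝ) : ‖saddleIntegrand a b R (x + y * I)‖ =
    Real.exp (R * (phase b (x + y * I)).re + (1 - a) * x) := by
  simp [saddleIntegrand, Complex.norm_exp]

lemma wrightIntegrand_add_log (a : ℝ) (hR : 0 < R) (w : ℂ) :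
    wrightIntegrand a b (R ^ (1 + b) / b) (w + Real.log R) =
      (R ^ (1 - a) : ℝ) * saddleIntegrand a b R w := by
  have hpow (s : ℝ) : ((R ^ s : ℝ) : ℂ) = Complex.exp (s * Real.log R) := by
    rw [Real.rpow_def_of_pos hR, mul_comm]
    push_cast
    rfl
  have hlog : Complex.exp (Real.log R) = R := by
    rw [← Complex.ofReal_exp, Real.exp_log hR]
  have hexp : Complex.exp (w + Real.log R) = R * Complex.exp w := by
    rw [Complex.exp_add, hlog, mul_comm]
  have hdecay : ((R ^ (1 + b) : ℝ) : ℂ) * Complex.exp (-(b * (w + Real.log R))) =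
      R * Complex.exp (-(b * w)) := by
    rw [hpow, ← hlog, hlog, ← Complex.exp_add, ← hlog, ← Complex.exp_add]
    push_cast
    congr 1
    ring
  rw [wrightIntegrand, hankelIntegrand, saddleIntegrand, phase, hpow, hexp, ← Complex.exp_add,
    ← Complex.exp_add]
  push_cast
  congr 1
  linear_combination (-1 / (b : ℂ)) * hdecay

lemma wrightJ_rpow_div_eq (ha : 0 < a) (hb : 0 ≤ b) (hR : 0 < R) (x : ℝ) :
    wrightJ a b (R ^ (1 + b) / b) =
      R ^ (1 - a) / π * (hookIntegral (saddleIntegrand a b R) x).im := by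
  rw [wrightJ_eq_im_hookIntegral ha hb _ (x + Real.log R), ← hookIntegral_comp_add]
  simp_rw [wrightIntegrand_add_log a hR]
  rw [hookIntegral_const_mul, Complex.im_ofReal_mul]
  ring

lemma saddleIntegrand_descentLine (a b R τ : ℝ) : saddleIntegrand a b R (descentLine b τ) =
    saddleIntegrand a b R (saddleAngle b * I) *
      (Complex.exp (R * (phase b (descentLine b τ) - phase b (saddleAngle b * I))) *
        Complex.exp ((1 - a) * (τ * saddleDirection b))) := by
  rw [saddleIntegrand, saddleIntegrand, ← Complex.exp_add, ← Complex.exp_add]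
  congr 1
  rw [descentLine]
  ring

lemma saddleIntegrand_saddleAngle_mul_saddleDirection (a R : ℝ) (hb : 0 < b) :
    saddleIntegrand a b R (saddleAngle b * I) * saddleDirection b =
      (Real.exp (R * saddleHeight b) : ℝ) *
        (Complex.exp ((R * saddleFrequency b + (1 / 2 - a) * saddleAngle b : ℝ) * I) * I) := by
  have hsplit : saddleIntegrand a b R (saddleAngle b * I) =
      (Real.exp (R * saddleHeight b) : ℝ) *
        Complex.exp ((R * saddleFrequency b + (1 / 2 - a) * saddleAngle b : ℝ) * I) *
          Complex.exp ((saddleAngle b / 2 : ℝ) * I) := by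
    rw [saddleIntegrand, phase_saddleAngle hb, Complex.ofReal_exp, ← Complex.exp_add,
      ← Complex.exp_add]
    push_cast
    congr 1
    ring
  rw [hsplit, mul_assoc, cexp_half_saddleAngle_mul_saddleDirection, mul_assoc]

lemma im_hookIntegral_saddleIntegrand (a R : ℝ) (hb : 0 < b) :
    (hookIntegral (saddleIntegrand a b R) (exitAbscissa b)).im =
      ((Real.exp (R * saddleHeight b) : ℝ) *
        (Complex.exp ((R * saddleFrequency b + (1 / 2 - a) * saddleAngle b : ℝ) * I) * I) *
          descentIntegral a b R + tailIntegral a b R).im := by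
  have hdescent : (∫ τ in entryTime b..exitTime b, saddleIntegrand a b R (descentLine b τ)) =
      saddleIntegrand a b R (saddleAngle b * I) * descentIntegral a b R := by
    simp_rw [saddleIntegrand_descentLine]
    rw [intervalIntegral.integral_const_mul, descentIntegral]
  rw [im_hookIntegral_eq_of_path (differentiable_saddleIntegrand a b R)
    (saddleIntegrand_ofReal_im a b R) (descentLine_entryTime hb) (descentLine_exitTime hb),
    add_assoc, ← saddleIntegrand_saddleAngle_mul_saddleDirection a R hb, mul_right_comm, ← hdescent]
  rfl

lemma tendsto_descentIntegral (a : ℝ) (hb : 0 < b) :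
    Tendsto (fun R : ℝ => (√R : ℂ) * descentIntegral a b R) atTop
      (𝓝 (√(2 * π / (1 + b)) : ℝ)) := by
  have hline : Continuous (descentLine b) := by
    unfold descentLine
    fun_prop
  have hre (τ : ℝ) (hτ : τ ∈ Icc (entryTime b) (exitTime b)) (hτ₀ : τ ≠ 0) :
      (phase b (descentLine b τ) - phase b (saddleAngle b * I)).re < 0 := by
    rw [phase_saddleAngle hb]
    simpa using re_phase_descentLine_lt hb hτ hτ₀
  simpa [descentIntegral] using tendsto_sqrt_mul_integral_exp_mul
    (h := fun τ : ℝ => Complex.exp ((1 - a) * (τ * saddleDirection b)))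
    (((continuous_phase b).comp hline).sub continuous_const) (by fun_prop) (entryTime_neg hb)
    (exitTime_pos hb) (by positivity) (phase_descentLine_sub_isLittleO hb) hre

lemma norm_integral_saddleIntegrand_vertical_le {x y₀ y₁ m : ℝ} (a : ℝ) (hR : 0 ≤ R)
    (hy : y₀ ≤ y₁) (hm : ∀ y ∈ Icc y₀ y₁, (phase b (x + y * I)).re ≤ m) :
    ‖∫ y in y₀..y₁, saddleIntegrand a b R (x + y * I)‖ ≤
      Real.exp ((1 - a) * x) * (y₁ - y₀) * Real.exp (R * m) := by
  have hbound := intervalIntegral.norm_integral_le_of_norm_le_const (a := y₀) (b := y₁)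
    (f := fun y : ℝ => saddleIntegrand a b R (x + y * I))
    (C := Real.exp (R * m + (1 - a) * x)) fun y hmem => by
      rw [uIoc_of_le hy] at hmem
      rw [norm_saddleIntegrand]
      gcongr
      exact hm y (Ioc_subset_Icc_self hmem)
  rw [abs_of_nonneg (sub_nonneg.2 hy), Real.exp_add] at hbound
  linarith

lemma re_phase_add_pi_mul_I_le (hb : 0 < b) {r : ℝ} (hr : 0 ≤ r) :
    (phase b (r + π * I)).re ≤ 1 / b - Real.exp r := by
  have hexp : Real.exp (-(b * r)) ≤ 1 := Real.exp_le_one_iff.2 (by nlinarith)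
  have hcos : -(Real.exp (-(b * r)) * Real.cos (b * π) / b) ≤ 1 / b := by
    rw [← neg_div]
    gcongr
    nlinarith [Real.exp_pos (-(b * r)), Real.neg_one_le_cos (b * π)]
  rw [phase_re, Real.cos_pi]
  linarith

lemma norm_integral_saddleIntegrand_horizontal_le {x m : ℝ} (a : ℝ) (hb : 0 < b) (hR : 1 ≤ R)
    (hx : 0 ≤ x) (hm : ∀ r, x ≤ r → (phase b (r + π * I)).re ≤ m) :
    ‖∫ r in Ioi x, saddleIntegrand a b R (r + π * I)‖ ≤
      Real.exp (1 / b - m) * (∫ r in Ioi x, Real.exp (-(1 * Real.exp r) + (1 - a) * r)) *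
        Real.exp (R * m) := by
  have hdom := (integrableOn_exp_neg_mul_exp_add_mul one_pos (1 - a) x).const_mul
    (Real.exp (1 / b - m) * Real.exp (R * m))
  have hpointwise : ∀ᵐ r : ℝ ∂volume.restrict (Ioi x), ‖saddleIntegrand a b R (r + π * I)‖ ≤
      Real.exp (1 / b - m) * Real.exp (R * m) * Real.exp (-(1 * Real.exp r) + (1 - a) * r) := by
    filter_upwards [ae_restrict_mem measurableSet_Ioi] with r hr
    rw [norm_saddleIntegrand, ← Real.exp_add, ← Real.exp_add]
    refine Real.exp_le_exp.2 ?_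
    have hgap := mul_le_mul_of_nonneg_left (hm r (mem_Ioi.1 hr).le) (sub_nonneg.2 hR)
    linarith [re_phase_add_pi_mul_I_le hb (hx.trans (mem_Ioi.1 hr).le)]
  refine (norm_integral_le_of_norm_le hdom hpointwise).trans_eq ?_
  rw [integral_const_mul]
  ring

lemma exists_norm_tailIntegral_le (a : ℝ) (hb : 0 < b) : ∃ η > 0, ∃ C : ℝ, ∀ R, 1 ≤ R →
    ‖tailIntegral a b R‖ ≤ C * Real.exp (R * (saddleHeight b - η)) := by
  obtain ⟨η, hη, hvertical, hhorizontal⟩ := exists_pos_re_phase_le_saddleHeight_sub hb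
  refine ⟨η, hη, Real.exp ((1 - a) * exitAbscissa b) * (π - exitHeight b) +
    Real.exp (1 / b - (saddleHeight b - η)) *
      ∫ r in Ioi (exitAbscissa b), Real.exp (-(1 * Real.exp r) + (1 - a) * r),
    fun R hR => (norm_add_le _ _).trans ?_⟩
  rw [norm_mul, Complex.norm_I, mul_one]
  exact (add_le_add
    (norm_integral_saddleIntegrand_vertical_le a (by linarith) (min_le_right _ _) hvertical)
    (norm_integral_saddleIntegrand_horizontal_le a hb hR (exitAbscissa_pos hb).le
      hhorizontal)).trans_eq (add_mul _ _ _).symm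

lemma tendsto_tailIntegral (a : ℝ) (hb : 0 < b) :
    Tendsto (fun R : ℝ => ((√R * Real.exp (-(R * saddleHeight b)) : ℝ) : ℂ) * tailIntegral a b R)
      atTop (𝓝 0) := by
  obtain ⟨η, hη, C, hC⟩ := exists_norm_tailIntegral_le a hb
  have hlim : Tendsto (fun R : ℝ => C * (R ^ (1 / 2 : ℝ) * Real.exp (-η * R))) atTop (𝓝 0) := by
    simpa using (tendsto_rpow_mul_exp_neg_mul_atTop_nhds_zero (1 / 2) η hη).const_mul C
  refine squeeze_zero_norm' ?_ hlim
  filter_upwards [eventually_ge_atTop 1] with R hR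
  rw [norm_mul, Complex.norm_real, Real.norm_of_nonneg (by positivity), ← Real.sqrt_eq_rpow]
  calc √R * Real.exp (-(R * saddleHeight b)) * ‖tailIntegral a b R‖
      ≤ √R * Real.exp (-(R * saddleHeight b)) * (C * Real.exp (R * (saddleHeight b - η))) := by
        gcongr
        exact hC R hR
    _ = C * (√R * (Real.exp (-(R * saddleHeight b)) * Real.exp (R * (saddleHeight b - η)))) := by
        ring
    _ = C * (√R * Real.exp (-η * R)) := by
        rw [← Real.exp_add]
        ring_nf

lemma tendsto_hookIntegral_saddleIntegrand (a : ℝ) (hb : 0 < b) :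
    Tendsto (fun R : ℝ => √R * Real.exp (-(R * saddleHeight b)) *
        (hookIntegral (saddleIntegrand a b R) (exitAbscissa b)).im -
      √(2 * π / (1 + b)) * Real.cos (R * saddleFrequency b + (1 / 2 - a) * saddleAngle b))
      atTop (𝓝 0) := by
  set u : ℝ → ℂ := fun R =>
    Complex.exp ((R * saddleFrequency b + (1 / 2 - a) * saddleAngle b : ℝ) * I) * I with hu
  have hcos (R : ℝ) :
      Real.cos (R * saddleFrequency b + (1 / 2 - a) * saddleAngle b) = (u R).im := by
    rw [hu, Complex.mul_I_im, Complex.exp_ofReal_mul_I_re]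
  have hbounded : IsBoundedUnder (· ≤ ·) atTop (norm ∘ u) :=
    isBoundedUnder_of ⟨1, fun R => by simp [hu, Complex.norm_exp]⟩
  have hdescent := (tendsto_sub_nhds_zero_iff.2
    (tendsto_descentIntegral a hb)).zero_mul_isBoundedUnder_le hbounded
  have htotal := (Complex.continuous_im.tendsto 0).comp
    (by simpa only [add_zero] using hdescent.add (tendsto_tailIntegral a hb))
  refine htotal.congr fun R => ?_
  have hexp : ((Real.exp (-(R * saddleHeight b)) : ℝ) : ℂ) * (Real.exp (R * saddleHeight b) : ℝ) =
      1 := by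
    rw [← Complex.ofReal_mul, ← Real.exp_add, neg_add_cancel, Real.exp_zero, Complex.ofReal_one]
  rw [hcos, im_hookIntegral_saddleIntegrand a R hb, ← Complex.im_ofReal_mul,
    ← Complex.im_ofReal_mul, ← Complex.sub_im, Complex.ofReal_mul, Function.comp_apply,
    Complex.ofReal_mul]
  congr 1
  linear_combination (-(√R : ℂ) * u R * descentIntegral a b R) * hexp

theorem tendsto_wrightJ_rpow_div (ha : 0 < a) (hb : 0 < b) :
    Tendsto (fun R : ℝ => R ^ (a - 1 / 2) * Real.exp (-(R * saddleHeight b)) *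
        wrightJ a b (R ^ (1 + b) / b) -
      √(2 / (π * (1 + b))) * Real.cos (R * saddleFrequency b + (1 / 2 - a) * saddleAngle b))
      atTop (𝓝 0) := by
  have hconst : √(2 / (π * (1 + b))) = √(2 * π / (1 + b)) / π := by
    rw [Real.sqrt_eq_iff_mul_self_eq (by positivity) (by positivity), div_mul_div_comm,
      Real.mul_self_sqrt (by positivity)]
    field_simp
  have hlim := (tendsto_hookIntegral_saddleIntegrand a hb).div_const π
  rw [zero_div] at hlim
  refine hlim.congr' ?_
  filter_upwards [eventually_gt_atTop 0] with R hR
  have hsqrt : √R = R ^ (a - 1 / 2) * R ^ (1 - a) := by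
    rw [Real.sqrt_eq_rpow, ← Real.rpow_add hR]
    congr 1
    ring
  rw [wrightJ_rpow_div_eq ha hb.le hR, hconst, hsqrt]
  ring

end WrightAsymptotics

section Averaging

open Set

variable {f g : ℝ → ℝ} {κ l : ℝ}

lemma intervalIntegrable_rpow_sub_one_mul_cos (hκ : 0 < κ) (c d l μ x : ℝ) :
    IntervalIntegrable (fun v => v ^ (κ - 1) * (c + d * Real.cos (l * v ^ κ + μ))) volume 0 x := by
  refine (intervalIntegral.intervalIntegrable_rpow' (by linarith)).mul_continuousOn ?_
  have hpow : Continuous fun v : ℝ => v ^ κ := Real.continuous_rpow_const hκ.le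
  fun_prop

lemma integral_rpow_sub_one_mul_cos {x : ℝ} (hκ : 0 < κ) (hl : l ≠ 0) (hx : 0 ≤ x) (c d μ : ℝ) :
    ∫ v in (0 : ℝ)..x, v ^ (κ - 1) * (c + d * Real.cos (l * v ^ κ + μ)) =
      c / κ * x ^ κ + d / (l * κ) * (Real.sin (l * x ^ κ + μ) - Real.sin μ) := by
  have hpow : Continuous fun v : ℝ => v ^ κ := Real.continuous_rpow_const hκ.le
  have hderiv (v : ℝ) (hv : v ∈ Ioo 0 x) : HasDerivAt
      (fun v => c / κ * v ^ κ + d / (l * κ) * Real.sin (l * v ^ κ + μ))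
      (v ^ (κ - 1) * (c + d * Real.cos (l * v ^ κ + μ))) v := by
    have hrpow := Real.hasDerivAt_rpow_const (p := κ) (Or.inl hv.1.ne')
    refine ((hrpow.const_mul (c / κ)).add
      (((hrpow.const_mul l).add_const μ).sin.const_mul (d / (l * κ)))).congr_deriv ?_
    field_simp
  rw [intervalIntegral.integral_eq_sub_of_hasDerivAt_of_le hx (by fun_prop) hderiv
    (intervalIntegrable_rpow_sub_one_mul_cos hκ c d l μ x), Real.zero_rpow hκ.ne']
  ring_nf

lemma tendsto_rpow_neg_mul_integral_rpow_sub_one_mul_cos (hκ : 0 < κ) (hl : l ≠ 0) (c d μ : ℝ) :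
    Tendsto (fun x : ℝ => x ^ (-κ) *
      ∫ v in (0 : ℝ)..x, v ^ (κ - 1) * (c + d * Real.cos (l * v ^ κ + μ))) atTop
      (𝓝 (c / κ)) := by
  have hbounded : IsBoundedUnder (· ≤ ·) atTop
      (norm ∘ fun x : ℝ => d / (l * κ) * (Real.sin (l * x ^ κ + μ) - Real.sin μ)) := by
    refine isBoundedUnder_of ⟨‖d / (l * κ)‖ * (1 + 1), fun x => ?_⟩
    rw [Function.comp_apply, norm_mul]
    gcongr
    exact (norm_sub_le _ _).trans (add_le_add (Real.abs_sin_le_one _) (Real.abs_sin_le_one _))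
  have hlim := ((tendsto_rpow_neg_atTop hκ).zero_mul_isBoundedUnder_le hbounded).const_add (c / κ)
  rw [add_zero] at hlim
  refine hlim.congr' ?_
  filter_upwards [eventually_gt_atTop 0] with x hx
  have hcancel : x ^ (-κ) * x ^ κ = 1 := by
    rw [← Real.rpow_add hx, neg_add_cancel, Real.rpow_zero]
  rw [integral_rpow_sub_one_mul_cos hκ hl hx.le]
  linear_combination (-(c / κ)) * hcancel

lemma abs_integral_le_of_abs_mul_rpow_le {δ N x : ℝ} (hκ : 0 < κ) (hN : 0 < N) (hx : N ≤ x)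
    (hg : ∀ v, N ≤ v → |g v * v ^ (1 - κ)| ≤ δ) :
    |∫ v in N..x, g v| ≤ δ / κ * x ^ κ := by
  have hδ : 0 ≤ δ := (abs_nonneg _).trans (hg N le_rfl)
  have hbound : ‖∫ v in N..x, g v‖ ≤ ∫ v in N..x, δ * v ^ (κ - 1) := by
    refine intervalIntegral.norm_integral_le_of_norm_le hx (Eventually.of_forall fun v hv => ?_)
      ((intervalIntegral.intervalIntegrable_rpow' (by linarith)).const_mul δ)
    have hv₀ : 0 < v := hN.trans hv.1
    calc ‖g v‖ = |g v * v ^ (1 - κ)| * v ^ (κ - 1) := by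
          rw [abs_mul, abs_of_pos (Real.rpow_pos_of_pos hv₀ _), mul_assoc, ← Real.rpow_add hv₀,
            sub_add_sub_cancel, sub_self, Real.rpow_zero, mul_one, Real.norm_eq_abs]
      _ ≤ δ * v ^ (κ - 1) := by gcongr; exact hg v hv.1.le
  rw [intervalIntegral.integral_const_mul, integral_rpow (Or.inl (by linarith)),
    sub_add_cancel] at hbound
  refine hbound.trans ?_
  rw [mul_div_assoc', div_mul_eq_mul_div]
  gcongr
  linarith [Real.rpow_nonneg hN.le κ]

lemma tendsto_rpow_neg_mul_integral_zero (hκ : 0 < κ)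
    (hg : ∀ x, IntervalIntegrable g volume 0 x)
    (hlim : Tendsto (fun v => g v * v ^ (1 - κ)) atTop (𝓝 0)) :
    Tendsto (fun x => x ^ (-κ) * ∫ v in (0 : ℝ)..x, g v) atTop (𝓝 0) := by
  refine Metric.tendsto_nhds.2 fun ε hε => ?_
  obtain ⟨N, hN₀, hN⟩ := ((eventually_gt_atTop 0).and
    (eventually_forall_ge_atTop.2 (Metric.tendsto_nhds.1 hlim (ε * κ / 2) (by positivity)))).exists
  have hinitial : Tendsto (fun x : ℝ => x ^ (-κ) * |∫ v in (0 : ℝ)..N, g v|) atTop (𝓝 0) := by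
    simpa using (tendsto_rpow_neg_atTop hκ).mul_const |∫ v in (0 : ℝ)..N, g v|
  filter_upwards [eventually_ge_atTop N, hinitial.eventually_lt_const (half_pos hε)]
    with x hx hsmall
  have hx₀ : 0 < x := hN₀.trans_le hx
  have htail := abs_integral_le_of_abs_mul_rpow_le hκ hN₀ hx fun v hv => by
    simpa using (hN v hv).le
  rw [dist_zero_right, Real.norm_eq_abs, abs_mul, abs_of_pos (Real.rpow_pos_of_pos hx₀ _),
    ← intervalIntegral.integral_add_adjacent_intervals (hg N) ((hg N).symm.trans (hg x))]
  calc x ^ (-κ) * |(∫ v in (0 : ℝ)..N, g v) + ∫ v in N..x, g v|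
      ≤ x ^ (-κ) * (|∫ v in (0 : ℝ)..N, g v| + ε * κ / 2 / κ * x ^ κ) := by
        gcongr
        exact (abs_add_le _ _).trans (by gcongr)
    _ = x ^ (-κ) * |∫ v in (0 : ℝ)..N, g v| + ε / 2 := by
        rw [mul_add, mul_left_comm, ← Real.rpow_add hx₀, neg_add_cancel, Real.rpow_zero]
        field_simp
    _ < ε := by linarith

/-- The phase `l * v ^ κ` has derivative of order `v ^ (κ - 1)`, so the oscillating term integrates
to a bounded function, which the factor `x ^ (-κ)` sends to zero. -/
theorem tendsto_rpow_neg_mul_integral_of_cos_asymptotics {c d μ : ℝ} (hκ : 0 < κ) (hl : l ≠ 0)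
    (hf : ∀ x, IntervalIntegrable f volume 0 x)
    (hlim : Tendsto (fun v => f v * v ^ (1 - κ) - (c + d * Real.cos (l * v ^ κ + μ))) atTop
      (𝓝 0)) :
    Tendsto (fun x => x ^ (-κ) * ∫ v in (0 : ℝ)..x, f v) atTop (𝓝 (c / κ)) := by
  set m : ℝ → ℝ := fun v => v ^ (κ - 1) * (c + d * Real.cos (l * v ^ κ + μ))
  have hmint := intervalIntegrable_rpow_sub_one_mul_cos hκ c d l μ
  have herror := tendsto_rpow_neg_mul_integral_zero hκ (fun x => (hf x).sub (hmint x)) <|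
    hlim.congr' <| by
      filter_upwards [eventually_gt_atTop 0] with v hv
      have hcancel : v ^ (κ - 1) * v ^ (1 - κ) = 1 := by
        rw [← Real.rpow_add hv, sub_add_sub_cancel, sub_self, Real.rpow_zero]
      linear_combination (c + d * Real.cos (l * v ^ κ + μ)) * hcancel
  have htotal := herror.add (tendsto_rpow_neg_mul_integral_rpow_sub_one_mul_cos hκ hl c d μ)
  rw [zero_add] at htotal
  refine htotal.congr fun x => ?_
  rw [intervalIntegral.integral_sub (hf x) (hmint x)]
  ring

end Averaging

section HardEdge

open scoped Real

variable {α θ : ℝ}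

lemma saddleAngle_one_div (hθ : 0 < θ) : saddleAngle (1 / θ) = π - saddleAngle θ := by
  rw [saddleAngle, saddleAngle]
  field_simp
  ring

lemma saddleHeight_one_div (hθ : 0 < θ) : saddleHeight (1 / θ) = -(θ * saddleHeight θ) := by
  rw [saddleHeight, saddleHeight, saddleAngle_one_div hθ, Real.cos_pi_sub]
  field_simp
  ring

lemma saddleFrequency_one_div (hθ : 0 < θ) :
    saddleFrequency (1 / θ) = θ * saddleFrequency θ := by
  rw [saddleFrequency, saddleFrequency, saddleAngle_one_div hθ, Real.sin_pi_sub]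
  field_simp
  ring

lemma saddleFrequency_pos (hθ : 0 < θ) : 0 < saddleFrequency θ :=
  mul_pos (by positivity) (Real.sin_pos_of_pos_of_lt_pi (saddleAngle_pos hθ) (saddleAngle_lt_pi hθ))

lemma tendsto_mul_sub_mul_zero {ι 𝕜 : Type*} [NonUnitalSeminormedRing 𝕜] {l : Filter ι}
    {f g f₀ g₀ : ι → 𝕜} (hf : Tendsto (fun i => f i - f₀ i) l (𝓝 0))
    (hg : Tendsto (fun i => g i - g₀ i) l (𝓝 0)) (hf₀ : IsBoundedUnder (· ≤ ·) l (norm ∘ f₀))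
    (hg₀ : IsBoundedUnder (· ≤ ·) l (norm ∘ g₀)) :
    Tendsto (fun i => f i * g i - f₀ i * g₀ i) l (𝓝 0) := by
  have hsum := ((hf.mul hg).add (isBoundedUnder_le_mul_tendsto_zero hf₀ hg)).add
    (hf.zero_mul_isBoundedUnder_le hg₀)
  simp only [mul_zero, add_zero] at hsum
  refine hsum.congr fun i => ?_
  noncomm_ring

lemma isBoundedUnder_norm_mul_cos {ι : Type*} (l : Filter ι) (c : ℝ) (φ : ι → ℝ) :
    IsBoundedUnder (· ≤ ·) l (norm ∘ fun i => c * Real.cos (φ i)) := by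
  refine isBoundedUnder_of ⟨|c|, fun i => ?_⟩
  rw [Function.comp_apply, Real.norm_eq_abs, abs_mul]
  exact mul_le_of_le_one_right (abs_nonneg c) (Real.abs_cos_le_one _)

/-- The sum of the constant phases of the two Wright functions in Borodin's kernel. -/
noncomputable def hardEdgePhase (α θ : ℝ) : ℝ :=
  (1 / 2 - (α + 1) / θ) * saddleAngle (1 / θ) + (1 / 2 - (α + 1)) * saddleAngle θ

/-- The two constant phases differ by `π / 2 - saddleAngle θ`, whatever the value of `α`. -/
lemma two_mul_cos_mul_cos_saddle (hθ : 0 < θ) (α x : ℝ) :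
    2 * Real.cos (x + (1 / 2 - (α + 1) / θ) * saddleAngle (1 / θ)) *
        Real.cos (x + (1 / 2 - (α + 1)) * saddleAngle θ) =
      Real.sin (saddleAngle θ) + Real.cos (2 * x + hardEdgePhase α θ) := by
  have hdiff : x + (1 / 2 - (α + 1) / θ) * saddleAngle (1 / θ) -
      (x + (1 / 2 - (α + 1)) * saddleAngle θ) = π / 2 - saddleAngle θ := by
    rw [saddleAngle_one_div hθ, saddleAngle]
    field_simp
    ring
  rw [Real.two_mul_cos_mul_cos, hdiff, Real.cos_pi_div_two_sub, hardEdgePhase]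
  congr 2
  ring

lemma sqrt_two_div_mul_sqrt_two_div (hθ : 0 < θ) :
    √(2 / (π * (1 + 1 / θ))) * √(2 / (π * (1 + θ))) = √θ * (2 / (π * (1 + θ))) := by
  have hdual : 2 / (π * (1 + 1 / θ)) = θ * (2 / (π * (1 + θ))) := by
    field_simp
    ring
  rw [hdual, Real.sqrt_mul hθ.le, mul_assoc, Real.mul_self_sqrt (by positivity)]

/-- At the scales `R` and `θ * R` the exponential growth of one factor cancels the decay of the
other, by `saddleHeight_one_div`. -/
lemma tendsto_wrightJ_mul_wrightJ (hα : -1 < α) (hθ : 0 < θ) :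
    Tendsto (fun R : ℝ => R ^ ((α + 1) / θ - 1 / 2) * (θ * R) ^ (α + 1 - 1 / 2) *
        (wrightJ ((α + 1) / θ) (1 / θ) (R ^ (1 + 1 / θ) / (1 / θ)) *
          wrightJ (α + 1) θ ((θ * R) ^ (1 + θ) / θ)) -
      √θ / (π * (1 + θ)) * (Real.sin (saddleAngle θ) +
        Real.cos (2 * (θ * saddleFrequency θ * R) + hardEdgePhase α θ))) atTop (𝓝 0) := by
  have hα' : 0 < α + 1 := by linarith
  have hfirst := tendsto_wrightJ_rpow_div (div_pos hα' hθ) (one_div_pos.2 hθ)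
  have hsecond := (tendsto_wrightJ_rpow_div hα' hθ).comp (tendsto_id.const_mul_atTop hθ)
  refine (tendsto_mul_sub_mul_zero hfirst hsecond (isBoundedUnder_norm_mul_cos _ _ _)
    (isBoundedUnder_norm_mul_cos _ _ _)).congr fun R => ?_
  have hexp : Real.exp (-(R * saddleHeight (1 / θ))) * Real.exp (-(θ * R * saddleHeight θ)) =
      1 := by
    rw [← Real.exp_add, saddleHeight_one_div hθ, Real.exp_eq_one_iff]
    ring
  have hcos := two_mul_cos_mul_cos_saddle hθ α (θ * saddleFrequency θ * R)
  have hconst := sqrt_two_div_mul_sqrt_two_div hθ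
  have hx : R * saddleFrequency (1 / θ) = θ * saddleFrequency θ * R := by
    rw [saddleFrequency_one_div hθ, mul_comm]
  have hy : θ * R * saddleFrequency θ = θ * saddleFrequency θ * R := by ring
  simp only [id, hx, hy]
  linear_combination
    (R ^ ((α + 1) / θ - 1 / 2) * (θ * R) ^ (α + 1 - 1 / 2) *
      wrightJ ((α + 1) / θ) (1 / θ) (R ^ (1 + 1 / θ) / (1 / θ)) *
      wrightJ (α + 1) θ ((θ * R) ^ (1 + θ) / θ)) * hexp -
    Real.cos (θ * saddleFrequency θ * R + (1 / 2 - (α + 1) / θ) * saddleAngle (1 / θ)) *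
      Real.cos (θ * saddleFrequency θ * R + (1 / 2 - (α + 1)) * saddleAngle θ) * hconst -
    √θ / (π * (1 + θ)) * hcos

/-- The parameter `R` at which the first Wright function of Borodin's kernel has argument
`v = R ^ (1 + 1 / θ) / (1 / θ)`; at `θ * R` the second one has argument `v ^ θ`. -/
noncomputable def hardEdgeScale (θ v : ℝ) : ℝ := (v / θ) ^ (θ / (1 + θ))

lemma hardEdgeScale_rpow_div {v : ℝ} (hθ : 0 < θ) (hv : 0 ≤ v) :
    hardEdgeScale θ v ^ (1 + 1 / θ) / (1 / θ) = v := by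
  have hexponent : θ / (1 + θ) * (1 + 1 / θ) = 1 := by
    field_simp
    ring
  rw [hardEdgeScale, ← Real.rpow_mul (by positivity), hexponent, Real.rpow_one, div_div,
    mul_one_div_cancel hθ.ne', div_one]

lemma mul_hardEdgeScale_rpow_div {v : ℝ} (hθ : 0 < θ) (hv : 0 ≤ v) :
    (θ * hardEdgeScale θ v) ^ (1 + θ) / θ = v ^ θ := by
  have hscale : 0 ≤ hardEdgeScale θ v := Real.rpow_nonneg (by positivity) _
  rw [Real.mul_rpow hθ.le hscale, hardEdgeScale, ← Real.rpow_mul (by positivity),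
    div_mul_cancel₀ _ (by positivity), Real.div_rpow hv hθ.le, Real.rpow_add hθ, Real.rpow_one]
  field_simp

lemma hardEdgeScale_eq {v : ℝ} (hθ : 0 < θ) (hv : 0 ≤ v) :
    hardEdgeScale θ v = θ ^ (-(θ / (1 + θ))) * v ^ (θ / (1 + θ)) := by
  rw [hardEdgeScale, Real.div_rpow hv hθ.le, Real.rpow_neg hθ.le, div_eq_inv_mul]

lemma tendsto_hardEdgeScale (hθ : 0 < θ) : Tendsto (hardEdgeScale θ) atTop atTop :=
  (tendsto_rpow_atTop (by positivity)).comp (tendsto_id.atTop_div_const hθ)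

lemma hardEdgeScale_rpow_mul_rpow {v : ℝ} (hθ : 0 < θ) (hv : 0 < v) (α : ℝ) :
    θ ^ (1 / (1 + θ)) / √θ *
        (hardEdgeScale θ v ^ ((α + 1) / θ - 1 / 2) *
          (θ * hardEdgeScale θ v) ^ (α + 1 - 1 / 2)) =
      v ^ α * v ^ (1 / (1 + θ)) := by
  have hscale : 0 < hardEdgeScale θ v := Real.rpow_pos_of_pos (by positivity) _
  have hlog : Real.log (hardEdgeScale θ v) = θ / (1 + θ) * (Real.log v - Real.log θ) := by
    rw [hardEdgeScale, Real.log_rpow (by positivity), Real.log_div hv.ne' hθ.ne']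
  refine Real.log_injOn_pos (Set.mem_Ioi.2 (by positivity)) (Set.mem_Ioi.2 (by positivity)) ?_
  rw [Real.sqrt_eq_rpow, ← Real.rpow_sub hθ, ← Real.rpow_add hv,
    Real.log_mul (by positivity) (by positivity), Real.log_mul (by positivity) (by positivity),
    Real.log_rpow hθ, Real.log_rpow hscale, Real.log_rpow (by positivity), Real.log_rpow hv,
    Real.log_mul hθ.ne' hscale.ne', hlog]
  field_simp
  ring

/-- The density in `v = x * u` of the integral defining Borodin's kernel on the diagonal. -/
noncomputable def borodinDensity (α θ v : ℝ) : ℝ :=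
  wrightJ ((α + 1) / θ) (1 / θ) v * wrightJ (α + 1) θ (v ^ θ) * v ^ α

lemma intervalIntegrable_borodinDensity (hα : -1 < α) (hθ : 0 < θ) (x y : ℝ) :
    IntervalIntegrable (borodinDensity α θ) volume x y := by
  have hα' : 0 < α + 1 := by linarith
  have hcont : Continuous fun v => wrightJ ((α + 1) / θ) (1 / θ) v * wrightJ (α + 1) θ (v ^ θ) :=
    (continuous_wrightJ (div_pos hα' hθ) (one_div_pos.2 hθ).le).mul
      ((continuous_wrightJ hα' hθ.le).comp (Real.continuous_rpow_const hθ.le))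
  exact (intervalIntegral.intervalIntegrable_rpow' hα).continuousOn_mul hcont.continuousOn

lemma borodinK_self {x : ℝ} (hx : 0 < x) (α θ : ℝ) :
    borodinK α θ x x = θ / x * ∫ v in (0 : ℝ)..x, borodinDensity α θ v := by
  have hsubst := intervalIntegral.smul_integral_comp_mul_left (a := 0) (b := 1)
    (borodinDensity α θ) x
  rw [mul_zero, mul_one, smul_eq_mul] at hsubst
  rw [← hsubst, ← mul_assoc, div_mul_cancel₀ _ hx.ne', borodinK, mul_assoc,
    ← intervalIntegral.integral_const_mul]
  congr 1
  refine intervalIntegral.integral_congr fun u hu => ?_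
  rw [Set.uIcc_of_le zero_le_one] at hu
  simp only [borodinDensity]
  rw [Real.mul_rpow hx.le hu.1 (z := α)]
  ring

lemma tendsto_borodinDensity (hα : -1 < α) (hθ : 0 < θ) :
    Tendsto (fun v : ℝ => borodinDensity α θ v * v ^ (1 / (1 + θ)) -
      (θ ^ (1 / (1 + θ)) / (π * (1 + θ)) * Real.sin (saddleAngle θ) +
        θ ^ (1 / (1 + θ)) / (π * (1 + θ)) *
          Real.cos (2 * (θ * saddleFrequency θ * θ ^ (-(θ / (1 + θ)))) * v ^ (θ / (1 + θ)) +
            hardEdgePhase α θ))) atTop (𝓝 0) := by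
  have hlim := ((tendsto_wrightJ_mul_wrightJ hα hθ).comp (tendsto_hardEdgeScale hθ)).const_mul
    (θ ^ (1 / (1 + θ)) / √θ)
  rw [mul_zero] at hlim
  refine hlim.congr' ?_
  filter_upwards [eventually_gt_atTop 0] with v hv
  have hpower := hardEdgeScale_rpow_mul_rpow hθ hv α
  have hphase : 2 * (θ * saddleFrequency θ * hardEdgeScale θ v) =
      2 * (θ * saddleFrequency θ * θ ^ (-(θ / (1 + θ)))) * v ^ (θ / (1 + θ)) := by
    rw [hardEdgeScale_eq hθ hv.le]
    ring
  have hconst : θ ^ (1 / (1 + θ)) / √θ * (√θ / (π * (1 + θ))) =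
      θ ^ (1 / (1 + θ)) / (π * (1 + θ)) := div_mul_div_cancel₀ (Real.sqrt_pos.2 hθ).ne'
  rw [Function.comp_apply, hardEdgeScale_rpow_div hθ hv.le, mul_hardEdgeScale_rpow_div hθ hv.le,
    hphase, borodinDensity]
  linear_combination wrightJ ((α + 1) / θ) (1 / θ) v * wrightJ (α + 1) θ (v ^ θ) * hpower -
    (Real.sin (saddleAngle θ) + Real.cos (2 * (θ * saddleFrequency θ * θ ^ (-(θ / (1 + θ)))) *
      v ^ (θ / (1 + θ)) + hardEdgePhase α θ)) * hconst

lemma tendsto_integral_borodinDensity (hα : -1 < α) (hθ : 0 < θ) :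
    Tendsto (fun x : ℝ => x ^ (-(θ / (1 + θ))) * ∫ v in (0 : ℝ)..x, borodinDensity α θ v) atTop
      (𝓝 (θ ^ (1 / (1 + θ)) / (π * (1 + θ)) * Real.sin (saddleAngle θ) / (θ / (1 + θ)))) := by
  have hexponent : 1 - θ / (1 + θ) = 1 / (1 + θ) := by
    field_simp
    ring
  have hfrequency := saddleFrequency_pos hθ
  have hdensity := tendsto_borodinDensity hα hθ
  rw [← hexponent] at hdensity ⊢
  exact tendsto_rpow_neg_mul_integral_of_cos_asymptotics (by positivity) (by positivity)
    (intervalIntegrable_borodinDensity hα hθ 0) hdensity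

end HardEdge

/-- Large-`x` asymptotics of the diagonal of Borodin's hard edge kernel. -/
theorem borodin_kernel_diagonal_asymptotics (α θ : ℝ) (hα : -1 < α) (hθ : 0 < θ) :
    Tendsto (fun x : ℝ => x ^ (1 / (1 + θ)) * borodinK α θ x x) atTop
      (𝓝 ((1 / Real.pi) * θ ^ (1 / (1 + θ)) * Real.sin (Real.pi / (1 + θ)))) := by
  have hexponent : 1 / (1 + θ) = -(θ / (1 + θ)) + 1 := by
    field_simp
    ring
  have hlimit : θ * (θ ^ (1 / (1 + θ)) / (Real.pi * (1 + θ)) * Real.sin (saddleAngle θ) /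
      (θ / (1 + θ))) = (1 / Real.pi) * θ ^ (1 / (1 + θ)) * Real.sin (Real.pi / (1 + θ)) := by
    rw [saddleAngle]
    field_simp
  rw [← hlimit]
  refine ((tendsto_integral_borodinDensity hα hθ).const_mul θ).congr' ?_
  filter_upwards [eventually_gt_atTop 0] with x hx
  rw [borodinK_self hx, hexponent, Real.rpow_add hx, Real.rpow_one]
  field_simp
end
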